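/- arXiv:1409.2135 — 2 statements merged into one kernel-verified Lean document; each statement's English description precedes it below -/
import Mathlib

section
/- For every t with 2 ≤ t ≤ n, the quotient ring S/I_t is a normal domain: S/I_t is an integral domain that is integrally closed in its field of fractions. -/
/-!
Fill in the symmetric matrix one entry at a time, column by column down to the diagonal, and replace
the vanishing of all minors of one size by rank conditions: the first `k` rows of the known corner
have rank at most `g k`, where `g` grows by steps of height at most one. The normality of the
quotients is proved for all such `g` by induction on the number of entries.

When the entry `x` at `(i, j)` is added, nothing is imposed on `x` if `g (i + 1) = g i + 1`, and
`x = 0` if `g (i + 1) = 0`. In the remaining case put `s = x⁻¹`. Using `x` as a pivot to clear the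
column above it is a congruence whose inverse is polynomial in `s`. It turns the conditions for `g`
into those for the rank function `g'` obtained by postponing the last jump `k < i` of `g` to `i`,
imposed on the entries preceding `(k, j)` only. Let `A` and `E` be the quotients without the entry
`x` for `g` and for `g'`, normal domains by induction. The congruence embeds `A` into `E[s]` so that
`A[s] = E[s]`, which is normal as well, and the new quotient becomes `A[s⁻¹]`: modulo linear
relations `c x + r` every relation is trivial, since its leading coefficient vanishes at `s = 0`.

Finally, `A[s⁻¹]` is integrally closed because `A` and `A[s]` are: an element `y` integral over
`A[s⁻¹]` has `sᵐ y ∈ A[s]` for some `m`, subtracting from `y` a multiple of `s⁻ᵐ` by an element of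
`A` lowers `m`, and an element integral over both `A[s]` and `A[s⁻¹]` lies in every valuation ring
containing `A`.
-/

/-- The minor `[a_1,…,a_s | b_1,…,b_s]` of the generic symmetric matrix `X = (x_{ij})`,
where the variables of `S = K[x_{ij} : 1 ≤ i ≤ j ≤ n]` are indexed by unordered pairs
(so that `x_{ij} = x_{ji}` automatically). -/
noncomputable def symMinor (K : Type*) [Field K] {n s : ℕ} (a b : Fin s → Fin n) :
    MvPolynomial (Sym2 (Fin n)) K :=
  Matrix.det (Matrix.of fun k l => (MvPolynomial.X s(a k, b l) : MvPolynomial (Sym2 (Fin n)) K))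

/-- The ideal `I_t` of `S` generated by all `t × t` minors of the generic symmetric
matrix `X`. -/
noncomputable def minorsIdeal (K : Type*) [Field K] (n t : ℕ) :
    Ideal (MvPolynomial (Sym2 (Fin n)) K) :=
  Ideal.span {p | ∃ a b : Fin t → Fin n, StrictMono a ∧ StrictMono b ∧ p = symMinor K a b}

namespace SymDet

section IntegralClosure

variable {A F : Type*} [CommRing A] [Field F] [Algebra A F]

lemma exists_pow_mul_isIntegral_adjoin_singleton {s y : F} (hs : s ≠ 0)
    (hy : IsIntegral (Algebra.adjoin A {s⁻¹}) y) :
    ∃ m : ℕ, IsIntegral (Algebra.adjoin A {s}) (s ^ m * y) := by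
  let E := Algebra.adjoin A {s}
  let t : E := ⟨s, Algebra.self_mem_adjoin_singleton A s⟩
  let L := Localization.Away t
  have ht : IsUnit (algebraMap E F t) := hs.isUnit
  let : Algebra L F := (IsLocalization.Away.lift t ht).toAlgebra
  have : IsScalarTower E L F :=
    .of_algebraMap_eq fun e => (IsLocalization.Away.lift_eq t ht e).symm
  have adjoin_le : Algebra.adjoin A {s⁻¹} ≤
      (IsScalarTower.toAlgHom E L F).range.restrictScalars A := by
    refine Algebra.adjoin_le (Set.singleton_subset_iff.2 ⟨IsLocalization.Away.invSelf t, ?_⟩)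
    refine eq_inv_of_mul_eq_one_right ?_
    have := congrArg (algebraMap L F) (IsLocalization.Away.mul_invSelf (S := L) t)
    rwa [map_mul, ← IsScalarTower.algebraMap_apply, map_one] at this
  obtain ⟨p, hp, hpy⟩ := hy
  have hlift : p.map (algebraMap _ F) ∈ Polynomial.lifts (algebraMap L F) :=
    (Polynomial.lifts_iff_coeff_lifts _).2 fun i => by
      rw [Polynomial.coeff_map]
      exact adjoin_le (p.coeff i).2
  obtain ⟨q, hq, -, hqm⟩ := Polynomial.lifts_and_natDegree_eq_and_monic hlift (hp.map _)
  have hyL : IsIntegral L y :=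
    ⟨q, hqm, by rw [← Polynomial.eval_map, hq, Polynomial.eval_map, hpy]⟩
  obtain ⟨⟨_, m, rfl⟩, hm⟩ := hyL.exists_multiple_integral_of_isLocalization (.powers t)
  exact ⟨m, hm⟩

lemma exists_add_mul_eq_of_mem_adjoin_singleton {s e : F} (he : e ∈ Algebra.adjoin A {s}) :
    ∃ a : A, ∃ e' ∈ Algebra.adjoin A {s}, e = algebraMap A F a + s * e' := by
  rw [Algebra.adjoin_singleton_eq_range_aeval] at he ⊢
  obtain ⟨p, rfl⟩ := he
  refine ⟨p.coeff 0, Polynomial.aeval s p.divX, ⟨_, rfl⟩, ?_⟩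
  have := congrArg (Polynomial.aeval s) p.X_mul_divX_add
  rw [map_add, map_mul, Polynomial.aeval_X, Polynomial.aeval_C] at this
  rw [add_comm, this]
  rfl

lemma mem_valuationSubring_of_isIntegral_adjoin {t y : F} {V : ValuationSubring F}
    (hA : (algebraMap A F).range ≤ V.toSubring) (ht : t ∈ V)
    (hy : IsIntegral (Algebra.adjoin A {t}) y) : y ∈ V := by
  have hle : (Algebra.adjoin A {t}).toSubring ≤ V.toSubring := by
    rw [Algebra.adjoin_eq_ring_closure, Subring.closure_le]
    exact Set.union_subset hA (Set.singleton_subset_iff.2 ht)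
  have hyV : IsIntegral V y :=
    hy.map_of_comp_eq (Subring.inclusion hle) (RingHom.id F) rfl
  obtain ⟨z, rfl⟩ := (isIntegrallyClosed_iff F).1 inferInstance hyV
  exact z.2

lemma mem_range_of_isIntegral_adjoin_inv [IsIntegrallyClosedIn (algebraMap A F).range F] {s y : F}
    (hy : IsIntegral (Algebra.adjoin A {s}) y) (hy' : IsIntegral (Algebra.adjoin A {s⁻¹}) y) :
    y ∈ (algebraMap A F).range := by
  by_contra hyA
  obtain ⟨V, hAV, hyV⟩ := Subring.exists_le_valuationSubring_of_isIntegrallyClosedIn hyA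
  exact hyV ((V.mem_or_inv_mem s).elim
    (fun h => mem_valuationSubring_of_isIntegral_adjoin hAV h hy)
    (fun h => mem_valuationSubring_of_isIntegral_adjoin hAV h hy'))

lemma mem_adjoin_inv_of_isIntegral [IsIntegrallyClosedIn (algebraMap A F).range F] {s : F}
    (hs : s ≠ 0) (m : ℕ) {y : F} (hy : IsIntegral (Algebra.adjoin A {s⁻¹}) y)
    (hsy : s ^ m * y ∈ Algebra.adjoin A {s}) : y ∈ Algebra.adjoin A {s⁻¹} := by
  induction m generalizing y with
  | zero =>
    rw [pow_zero, one_mul] at hsy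
    obtain ⟨a, rfl⟩ := mem_range_of_isIntegral_adjoin_inv
      (isIntegral_algebraMap (x := (⟨y, hsy⟩ : Algebra.adjoin A {s}))) hy
    exact Subalgebra.algebraMap_mem _ a
  | succ m ih =>
    obtain ⟨a, e, he, hae⟩ := exists_add_mul_eq_of_mem_adjoin_singleton hsy
    let w : Algebra.adjoin A {s⁻¹} :=
      algebraMap A _ a * ⟨s⁻¹, Algebra.self_mem_adjoin_singleton A s⁻¹⟩ ^ (m + 1)
    have hw : (w : F) = algebraMap A F a * s⁻¹ ^ (m + 1) := rfl
    have hdiff : s ^ m * (y - w) = e := by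
      refine mul_left_cancel₀ hs ?_
      have hinv : s ^ (m + 1) * s⁻¹ ^ (m + 1) = 1 := by rw [← mul_pow, mul_inv_cancel₀ hs, one_pow]
      rw [hw]
      linear_combination hae - algebraMap A F a * hinv
    rw [← sub_add_cancel y (w : F)]
    exact add_mem (ih (hy.sub (isIntegral_algebraMap (x := w))) (hdiff ▸ he)) w.2

theorem isIntegrallyClosedIn_adjoin_inv [IsIntegrallyClosedIn (algebraMap A F).range F] {s : F}
    (hs : s ≠ 0) [IsIntegrallyClosedIn (Algebra.adjoin A {s}) F] :
    IsIntegrallyClosedIn (Algebra.adjoin A {s⁻¹}) F := by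
  refine isIntegrallyClosedIn_iff.2 ⟨Subtype.val_injective, fun {y} hy => ?_⟩
  obtain ⟨m, hm⟩ := exists_pow_mul_isIntegral_adjoin_singleton hs hy
  obtain ⟨e, he⟩ := IsIntegrallyClosedIn.isIntegral_iff.1 hm
  exact ⟨⟨y, mem_adjoin_inv_of_isIntegral hs m hy (he ▸ e.2)⟩, rfl⟩

lemma isFractionRing_of_closure_eq_top {B : Subring F} (hB : Subfield.closure (B : Set F) = ⊤) :
    IsFractionRing B F := by
  have : FaithfulSMul B F := (faithfulSMul_iff_algebraMap_injective B F).2 Subtype.val_injective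
  refine .of_field _ _ fun z => ?_
  obtain ⟨a, ha, b, hb, rfl⟩ := Subfield.mem_closure_iff.1 (hB ▸ Subfield.mem_top z)
  rw [Subring.closure_eq] at ha hb
  exact ⟨⟨a, ha⟩, ⟨b, hb⟩, rfl⟩

variable {E : Type*} [CommRing E] [Algebra A E] [Algebra E F] [IsScalarTower A E F]

lemma closure_range_algebraMap_eq_top [IsFractionRing E F] {s : E} (hs : Algebra.adjoin A {s} = ⊤)
    {c r : A} (hc : algebraMap A F c ≠ 0) (hcr : algebraMap A E c * s = algebraMap A E r) :
    Subfield.closure ((algebraMap A F).range : Set F) = ⊤ := by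
  set L := Subfield.closure ((algebraMap A F).range : Set F)
  have base_mem (a : A) : algebraMap A F a ∈ L := Subfield.subset_closure ⟨a, rfl⟩
  have s_mem : algebraMap E F s ∈ L := by
    have hcr' := congrArg (algebraMap E F) hcr
    rw [map_mul, ← IsScalarTower.algebraMap_apply, ← IsScalarTower.algebraMap_apply] at hcr'
    rw [eq_div_of_mul_eq hc ((mul_comm _ _).trans hcr')]
    exact L.div_mem (base_mem r) (base_mem c)
  have mem (e : E) : algebraMap E F e ∈ L := by
    have he : e ∈ Algebra.adjoin A {s} := hs ▸ Algebra.mem_top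
    induction he using Algebra.adjoin_induction with
    | mem x hx => rwa [Set.mem_singleton_iff.1 hx]
    | algebraMap a => rw [← IsScalarTower.algebraMap_apply]; exact base_mem a
    | add x y _ _ hx hy => rw [map_add]; exact L.add_mem hx hy
    | mul x y _ _ hx hy => rw [map_mul]; exact L.mul_mem hx hy
  refine eq_top_iff.2 fun z _ => ?_
  obtain ⟨a, b, -, rfl⟩ := IsFractionRing.div_surjective (A := E) z
  exact L.div_mem (mem a) (mem b)

theorem isIntegrallyClosed_adjoin_inv [IsFractionRing E F] [IsIntegrallyClosed E]
    [IsIntegrallyClosed (algebraMap A F).range] {s : E} (hs : Algebra.adjoin A {s} = ⊤)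
    (hs0 : s ≠ 0) {c r : A} (hc : algebraMap A F c ≠ 0)
    (hcr : algebraMap A E c * s = algebraMap A E r) :
    IsIntegrallyClosed (Algebra.adjoin A {(algebraMap E F s)⁻¹}) := by
  have htop := closure_range_algebraMap_eq_top (F := F) hs hc hcr
  have fracA : IsFractionRing (algebraMap A F).range F := isFractionRing_of_closure_eq_top htop
  have closedA := (isIntegrallyClosed_iff_isIntegrallyClosedIn (R := (algebraMap A F).range) F).1
    inferInstance
  have fracAdjoin (x : F) : IsFractionRing (Algebra.adjoin A {x}) F :=
    isFractionRing_of_closure_eq_top (B := (Algebra.adjoin A {x}).toSubring)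
      (eq_top_mono (Subfield.closure_mono (Set.range_subset_iff.2 (Subalgebra.algebraMap_mem _)))
        htop)
  have adjoin_eq : (IsScalarTower.toAlgHom A E F).range = Algebra.adjoin A {algebraMap E F s} := by
    rw [← Algebra.map_top, ← hs, AlgHom.map_adjoin, Set.image_singleton]
    rfl
  have hinj : Function.Injective (IsScalarTower.toAlgHom A E F) := IsFractionRing.injective E F
  have closedE : IsIntegrallyClosed (Algebra.adjoin A {algebraMap E F s}) :=
    .of_equiv ((AlgEquiv.ofInjective _ hinj).trans (Subalgebra.equivOfEq _ _ adjoin_eq)).toRingEquiv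
  have := (isIntegrallyClosed_iff_isIntegrallyClosedIn F).1 closedE
  exact (isIntegrallyClosed_iff_isIntegrallyClosedIn F).2
    (isIntegrallyClosedIn_adjoin_inv (A := A) ((map_ne_zero_iff _ hinj).2 hs0))

end IntegralClosure

section Quotient

open Polynomial

/-- A normal domain: an integral domain which is integrally closed in its fraction field. -/
def IsNormalDomain (R : Type*) [CommRing R] : Prop :=
  IsDomain R ∧ IsIntegrallyClosed R

lemma IsNormalDomain.of_ringEquiv {R S : Type*} [CommRing R] [CommRing S] (h : IsNormalDomain R)
    (e : R ≃+* S) : IsNormalDomain S :=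
  have := h.2
  ⟨e.symm.toMulEquiv.isDomain_iff.2 h.1, .of_equiv e⟩

variable {S E F : Type*} [CommRing S] [CommRing E] [Field F]

lemma coeff_zero_leadingCoeff_eq_zero_of_eval₂_inv {φ : S →+* E[X]} {ι : E[X] →+* F}
    (hι : Function.Injective ι) (hX : ι X ≠ 0) {f : S[X]} (hf : eval₂ (ι.comp φ) (ι X)⁻¹ f = 0) :
    (φ f.leadingCoeff).coeff 0 = 0 := by
  have : Invertible (ι X)⁻¹ := invertibleOfNonzero (inv_ne_zero hX)
  have hrev := eval₂_reverse_mul_pow (ι.comp φ) (ι X)⁻¹ f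
  rw [hf, invOf_eq_inv, inv_inv, mul_eq_zero_iff_right (pow_ne_zero _ (inv_ne_zero hX)),
    ← hom_eval₂, map_eq_zero_iff ι hι] at hrev
  have := congrArg constantCoeff hrev
  rw [hom_eval₂, constantCoeff_apply, coeff_X_zero, eval₂_at_zero, coeff_zero_reverse,
    map_zero] at this
  exact this

lemma mem_of_eval₂_inv_eq_zero {φ : S →+* E[X]} {ι : E[X] →+* F}
    (hι : Function.Injective ι) (hX : ι X ≠ 0) {I : Ideal S[X]}
    (hI : I ≤ RingHom.ker (eval₂RingHom (ι.comp φ) (ι X)⁻¹)) (hC : RingHom.ker φ ≤ I.comap C)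
    (hlin : ∀ c, (φ c).coeff 0 = 0 → ∃ r, C c * X + C r ∈ I) {f : S[X]}
    (hf : eval₂ (ι.comp φ) (ι X)⁻¹ f = 0) : f ∈ I := by
  induction hd : f.natDegree using Nat.strong_induction_on generalizing f with
  | _ d ih =>
    cases d with
    | zero =>
      rw [eq_C_of_natDegree_eq_zero hd] at hf ⊢
      rw [eval₂_C] at hf
      exact hC ((map_eq_zero_iff ι hι).1 hf)
    | succ d =>
      obtain ⟨r, hr⟩ := hlin _ (coeff_zero_leadingCoeff_eq_zero_of_eval₂_inv hι hX hf)
      have hmul := I.mul_mem_right (X ^ d) hr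
      have hsub : f - (C f.leadingCoeff * X + C r) * X ^ d = f.eraseLead - C r * X ^ d := by
        rw [← self_sub_C_mul_X_pow, hd]
        ring
      refine (I.sub_mem_iff_left hmul).1 (ih _ ?_ ?_ rfl)
      · rw [hsub]
        have herase : f.eraseLead.natDegree ≤ d := by simpa [hd] using f.eraseLead_natDegree_le
        exact Nat.lt_succ_of_le
          ((natDegree_sub_le_of_le herase (natDegree_C_mul_X_pow_le r d)).trans_eq (max_self d))
      · have h0 : eval₂ (ι.comp φ) (ι X)⁻¹ ((C f.leadingCoeff * X + C r) * X ^ d) = 0 := hI hmul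
        rw [eval₂_sub, hf, h0, sub_zero]

theorem isNormalDomain_quotient_of_eval₂_inv [IsDomain E] [IsIntegrallyClosed E] (φ : S →+* E[X])
    (hφ : IsNormalDomain (S ⧸ RingHom.ker φ)) (hsurj : Function.Surjective (eval₂RingHom φ X))
    [Algebra E[X] F] [IsFractionRing E[X] F] {I : Ideal S[X]}
    (hI : I ≤ RingHom.ker (eval₂RingHom ((algebraMap E[X] F).comp φ) (algebraMap E[X] F X)⁻¹))
    (hC : RingHom.ker φ ≤ I.comap C) (hlin : ∀ c, (φ c).coeff 0 = 0 → ∃ r, C c * X + C r ∈ I)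
    (hne : ∃ c, (φ c).coeff 0 = 0 ∧ φ c ≠ 0) : IsNormalDomain (S[X] ⧸ I) := by
  set ι := algebraMap E[X] F
  have hι : Function.Injective ι := IsFractionRing.injective _ _
  have hX : ι X ≠ 0 := (map_ne_zero_iff ι hι).2 X_ne_zero
  let := φ.toAlgebra
  let := (ι.comp φ).toAlgebra
  have : IsScalarTower S E[X] F := .of_algebraMap_eq fun _ => rfl
  obtain ⟨c, hc, hc0⟩ := hne
  obtain ⟨r, hr⟩ := hlin c hc
  have hcr : φ (-r) * X = φ c := hι <| by
    have hψ : eval₂ (ι.comp φ) (ι X)⁻¹ (C c * X + C r) = 0 := hI hr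
    rw [eval₂_add, eval₂_mul, eval₂_C, eval₂_C, eval₂_X, RingHom.comp_apply, RingHom.comp_apply]
      at hψ
    rw [map_neg, map_mul, map_neg]
    linear_combination (-ι X) * hψ + ι (φ c) * inv_mul_cancel₀ hX
  have hr0 : φ (-r) ≠ 0 := left_ne_zero_of_mul (hcr.trans_ne hc0)
  have hker : I = RingHom.ker (aeval (ι X)⁻¹ : S[X] →ₐ[S] F) :=
    le_antisymm hI fun f hf => mem_of_eval₂_inv_eq_zero hι hX hI hC hlin hf
  have htop : Algebra.adjoin S {(X : E[X])} = ⊤ := by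
    rw [Algebra.adjoin_singleton_eq_range_aeval]
    exact (AlgHom.range_eq_top _).2 hsurj
  have closedS : IsIntegrallyClosed (algebraMap S F).range := by
    have := hφ.2
    exact .of_equiv ((Ideal.quotEquivOfEq (RingHom.ker_comp_of_injective φ hι).symm).trans
      (ι.comp φ).quotientKerEquivRange)
  have closedAdjoin := isIntegrallyClosed_adjoin_inv (F := F) htop X_ne_zero
    ((map_ne_zero_iff ι hι).2 hr0) hcr
  have adjoin_eq := Algebra.adjoin_singleton_eq_range_aeval S (ι X)⁻¹
  let e : Algebra.adjoin S {(ι X)⁻¹} ≃+* S[X] ⧸ I :=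
    (Subalgebra.equivOfEq _ _ adjoin_eq).toRingEquiv.trans
      ((Ideal.quotEquivOfEq hker).trans (RingHom.quotientKerEquivRange _)).symm
  exact IsNormalDomain.of_ringEquiv ⟨inferInstance, closedAdjoin⟩ e

end Quotient

theorem isIntegrallyClosed_mvPolynomial (σ R : Type*) [Finite σ] [CommRing R] [IsDomain R]
    [IsIntegrallyClosed R] : IsIntegrallyClosed (MvPolynomial σ R) := by
  induction σ using Finite.induction_empty_option with
  | of_equiv e h => exact .of_equiv (MvPolynomial.renameEquiv R e).toRingEquiv
  | h_empty => exact .of_equiv (MvPolynomial.isEmptyRingEquiv R PEmpty).symm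
  | h_option h => exact .of_equiv (MvPolynomial.optionEquivLeft R _).symm.toRingEquiv

section CornerRank

open Matrix

variable {T : Type*} [CommRing T]

/-- The top left `k × w` corner of the infinite matrix `M` has rank at most `r`, in the sense that
all its minors of size `r + 1` vanish. -/
def CornerRankLE (M : Matrix ℕ ℕ T) (k w r : ℕ) : Prop :=
  ∀ a b : Fin (r + 1) → ℕ, (∀ l, a l < k) → (∀ l, b l < w) → (M.submatrix a b).det = 0

variable {M M' : Matrix ℕ ℕ T} {k k' w w' r r' i j : ℕ}

namespace CornerRankLE

lemma transpose (h : CornerRankLE M k w r) : CornerRankLE Mᵀ w k r := fun a b ha hb => by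
  rw [← transpose_submatrix, det_transpose]
  exact h b a hb ha

lemma congr (h : CornerRankLE M k w r) (hM : ∀ a < k, ∀ b < w, M' a b = M a b) :
    CornerRankLE M' k w r := fun a b ha hb => by
  rw [show M'.submatrix a b = M.submatrix a b from ext fun l m => hM _ (ha l) _ (hb m)]
  exact h a b ha hb

lemma mono (h : CornerRankLE M k w r) (hk : k' ≤ k) (hw : w' ≤ w) : CornerRankLE M k' w' r :=
  fun a b ha hb => h a b (fun l => (ha l).trans_le hk) fun l => (hb l).trans_le hw

lemma succ_row (h : CornerRankLE M k w r) : CornerRankLE M (k + 1) w (r + 1) := fun a b ha hb => by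
  by_cases ha_inj : Function.Injective a
  · obtain ⟨l₀, hl₀⟩ : ∃ l₀, ∀ l, l ≠ l₀ → a l < k := by
      by_cases hk : ∃ l, a l = k
      · obtain ⟨l₀, hl₀⟩ := hk
        exact ⟨l₀, fun l hl => (Nat.lt_succ_iff.1 (ha l)).lt_of_ne (hl₀ ▸ ha_inj.ne hl)⟩
      · exact ⟨0, fun l _ => (Nat.lt_succ_iff.1 (ha l)).lt_of_ne (not_exists.1 hk l)⟩
    rw [det_succ_row _ l₀]
    refine Finset.sum_eq_zero fun m _ => ?_
    rw [submatrix_submatrix]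
    exact mul_eq_zero_of_right _ (h _ _ (fun l => hl₀ _ (Fin.succAbove_ne _ _)) fun l => hb _)
  · obtain ⟨l, m, hlm, hne⟩ := Function.not_injective_iff.1 ha_inj
    exact det_zero_of_row_eq hne (by ext; simp only [submatrix_apply, hlm])

lemma le (h : CornerRankLE M k w r) (hr : r ≤ r') : CornerRankLE M k w r' := by
  induction hr with
  | refl => exact h
  | step _ ih => exact ih.succ_row.mono (Nat.le_succ k) le_rfl

lemma self (M : Matrix ℕ ℕ T) (k w : ℕ) : CornerRankLE M k w k := by
  induction k with
  | zero => exact fun a _ ha _ => absurd (ha 0) (Nat.not_lt_zero _)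
  | succ k ih => exact ih.succ_row

lemma of_rows_eq_sum (h : CornerRankLE M k' w r) (H : ℕ → ℕ → T)
    (hM : ∀ a < k, ∀ b < w, M' a b = ∑ m ∈ Finset.range k', H a m * M m b) :
    CornerRankLE M' k w r := fun a b ha hb => by
  have rows : M'.submatrix a b =
      fun l => ∑ m ∈ Finset.range k', H (a l) m • fun l' => M m (b l') := by
    ext l l'
    simp only [submatrix_apply, hM _ (ha l) _ (hb l'), Finset.sum_apply, Pi.smul_apply, smul_eq_mul]
  have expand := (detRowAlternating (R := T) (n := Fin (r + 1))).toMultilinearMap.map_sum_finset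
    (fun l m => H (a l) m • fun l' => M m (b l')) fun _ => Finset.range k'
  rw [rows]
  refine expand.trans (Finset.sum_eq_zero fun f hf => ?_)
  rw [MultilinearMap.map_smul_univ]
  refine smul_eq_zero_of_right _ (h f b (fun l => ?_) hb)
  exact Finset.mem_range.1 (Fintype.mem_piFinset.1 hf l)

lemma add_mul_row (h : CornerRankLE M k w r) (hi : i < k) (x : ℕ → T) :
    CornerRankLE (of fun a b => M a b + x a * M i b) k w r :=
  h.of_rows_eq_sum (fun a m => (if m = a then 1 else 0) + if m = i then x a else 0)
    fun a ha b _ => by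
      simp only [add_mul, ite_mul, one_mul, zero_mul, Finset.sum_add_distrib, Finset.sum_ite_eq',
        Finset.mem_range, ha, hi, if_true, of_apply]

lemma add_mul_col (h : CornerRankLE M k w r) (hj : j < w) (x : ℕ → T) :
    CornerRankLE (of fun a b => M a b + x b * M a j) k w r :=
  (h.transpose.add_mul_row hj x).transpose

lemma apply_eq_zero (h : CornerRankLE M k w 0) (hi : i < k) (hj : j < w) :
    M i j = 0 :=
  (det_fin_one _).symm.trans <| h (fun _ => i) (fun _ => j) (fun _ => hi) fun _ => hj

lemma det_eq_zero_of_card (h : CornerRankLE M k w r) {ι : Type*} [Fintype ι] [DecidableEq ι]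
    (hι : Fintype.card ι = r + 1) {a b : ι → ℕ} (ha : ∀ l, a l < k) (hb : ∀ l, b l < w) :
    (M.submatrix a b).det = 0 := by
  let e := Fintype.equivFinOfCardEq hι
  rw [← det_submatrix_equiv_self e.symm, submatrix_submatrix]
  exact h _ _ (fun _ => ha _) fun _ => hb _

end CornerRankLE

/-- The minor of `M` on the rows `i, a` and the columns `j, b`. -/
def borderedMinor (M : Matrix ℕ ℕ T) (i j : ℕ) {t : ℕ} (a b : Fin t → ℕ) : T :=
  (M.submatrix (Sum.elim (fun _ : Unit => i) a) (Sum.elim (fun _ : Unit => j) b)).det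

section borderedMinor

variable {t : ℕ} {a b : Fin t → ℕ}

lemma CornerRankLE.borderedMinor_eq_zero (h : CornerRankLE M k w t) (hi : i < k) (hj : j < w)
    (ha : ∀ l, a l < k) (hb : ∀ l, b l < w) : borderedMinor M i j a b = 0 :=
  h.det_eq_zero_of_card (by simp [add_comm]) (Sum.rec (fun _ => hi) ha) (Sum.rec (fun _ => hj) hb)

lemma map_borderedMinor {T' : Type*} [CommRing T'] (f : T →+* T') (M : Matrix ℕ ℕ T) (i j : ℕ)
    (a b : Fin t → ℕ) : f (borderedMinor M i j a b) = borderedMinor (M.map f) i j a b :=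
  f.map_det _

lemma submatrix_sumElim_eq_fromBlocks {R : Type*} (M : Matrix ℕ ℕ R) (i j : ℕ)
    (a b : Fin t → ℕ) :
    M.submatrix (Sum.elim (fun _ : Unit => i) a) (Sum.elim (fun _ : Unit => j) b) =
      fromBlocks (of fun _ _ => M i j) (M.submatrix (fun _ => i) b) (M.submatrix a fun _ => j)
        (M.submatrix a b) := by
  ext (l | l) (m | m) <;> rfl

lemma borderedMinor_of_col_eq_zero (h : ∀ l, M (a l) j = 0) :
    borderedMinor M i j a b = M i j * (M.submatrix a b).det := by
  rw [borderedMinor, submatrix_sumElim_eq_fromBlocks,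
    show M.submatrix a (fun _ : Unit => j) = 0 from ext fun l _ => h l, det_fromBlocks_zero₂₁,
    det_unique, of_apply]

lemma borderedMinor_eq_mul_of_isUnit (h : IsUnit (M.submatrix a b).det) :
    borderedMinor M i j a b = (M.submatrix a b).det *
      (M i j -
        ∑ l, (M.submatrix (fun _ : Unit => i) b * (M.submatrix a b)⁻¹) () l * M (a l) j) := by
  have := invertibleOfIsUnitDet _ h
  rw [borderedMinor, submatrix_sumElim_eq_fromBlocks, det_fromBlocks₂₂, det_unique (n := Unit),
    invOf_eq_nonsing_inv]
  rfl

end borderedMinor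

lemma CornerRankLE.of_borderedMinor {a b : Fin r → ℕ}
    (hab : IsUnit (M.submatrix a b).det) (h : ∀ i < k, ∀ j < w, borderedMinor M i j a b = 0) :
    CornerRankLE M k w r := by
  let Y : Matrix ℕ ℕ T := of fun m j => if hm : m < r then M (a ⟨m, hm⟩) j else 0
  let H (i m : ℕ) : T := if hm : m < r then
    (M.submatrix (fun _ : Unit => i) b * (M.submatrix a b)⁻¹) () ⟨m, hm⟩ else 0
  refine (CornerRankLE.self Y r w).of_rows_eq_sum H fun i hi j hj => ?_
  have hij := h i hi j hj
  rw [borderedMinor_eq_mul_of_isUnit hab, hab.mul_right_eq_zero] at hij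
  rw [sub_eq_zero.1 hij, Finset.sum_range]
  simp only [H, Y, Fin.is_lt, dif_pos, of_apply, Fin.eta]

lemma cornerRankLE_succ_succ_iff (hcol : ∀ a < i, M a j = 0) (hij : IsUnit (M i j)) :
    CornerRankLE M (i + 1) (j + 1) (r + 1) ↔ CornerRankLE M i j r := by
  constructor <;> intro h
  · intro a b ha hb
    have hborder := h.borderedMinor_eq_zero (Nat.lt_succ_self i) (Nat.lt_succ_self j)
      (fun l => (ha l).trans (Nat.lt_succ_self i)) fun l => (hb l).trans (Nat.lt_succ_self j)
    rw [borderedMinor_of_col_eq_zero fun l => hcol _ (ha l)] at hborder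
    exact hij.mul_right_eq_zero.1 hborder
  · have hwide : CornerRankLE M i (j + 1) r := fun a b ha hb => by
      by_cases hbj : ∃ m, b m = j
      · obtain ⟨m, hm⟩ := hbj
        exact det_eq_zero_of_column_eq_zero m fun l => by rw [submatrix_apply, hm, hcol _ (ha l)]
      · exact h a b ha fun m => (Nat.lt_succ_iff.1 (hb m)).lt_of_ne (not_exists.1 hbj m)
    exact hwide.succ_row

/-- The matrix `(1 + u eᵢᵀ) M (1 + eᵢ uᵀ)`, congruent to `M`. -/
def symmShear (i : ℕ) (u : ℕ → T) (M : Matrix ℕ ℕ T) : Matrix ℕ ℕ T :=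
  of fun a b => M a b + u a * M i b + u b * M a i + u a * u b * M i i

lemma symmShear_neg_symmShear {u : ℕ → T} (hu : u i = 0) :
    symmShear i (-u) (symmShear i u M) = M := by
  ext a b
  simp only [symmShear, of_apply, Pi.neg_apply, hu]
  ring

protected lemma CornerRankLE.symmShear (h : CornerRankLE M k w r) (hk : i < k) (hw : i < w)
    (u : ℕ → T) : CornerRankLE (symmShear i u M) k w r :=
  ((h.add_mul_col hw u).add_mul_row hk u).congr fun a _ b _ => by
    simp only [symmShear, of_apply]
    ring

lemma cornerRankLE_symmShear_iff (hk : i < k) (hw : i < w) {u : ℕ → T} (hu : u i = 0) :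
    CornerRankLE (symmShear i u M) k w r ↔ CornerRankLE M k w r :=
  ⟨fun h => symmShear_neg_symmShear (M := M) hu ▸ h.symmShear hk hw (-u),
    fun h => h.symmShear hk hw u⟩

/-- The matrix `M` with its entries at `(i, j)` and `(j, i)` replaced by `x`. -/
def updateSymm {R : Type*} (M : Matrix ℕ ℕ R) (i j : ℕ) (x : R) : Matrix ℕ ℕ R :=
  of fun a b => if s(a, b) = s(i, j) then x else M a b

lemma updateSymm_self {R : Type*} (M : Matrix ℕ ℕ R) (i j : ℕ) (x : R) :
    updateSymm M i j x i j = x := if_pos rfl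

lemma updateSymm_of_ne {R : Type*} {M : Matrix ℕ ℕ R} {i j a b : ℕ} {x : R}
    (h : s(a, b) ≠ s(i, j)) : updateSymm M i j x a b = M a b := if_neg h

lemma updateSymm_of_lt {R : Type*} {M : Matrix ℕ ℕ R} {i j a b : ℕ} {x : R} (hij : i ≤ j)
    (h : a < i ∨ (a ≤ i ∧ b < j) ∨ (a < j ∧ b < j)) : updateSymm M i j x a b = M a b :=
  updateSymm_of_ne fun hab => by rw [Sym2.eq_iff] at hab; omega

lemma updateSymm_updateSymm {R : Type*} (M : Matrix ℕ ℕ R) (i j : ℕ) (x y : R) :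
    updateSymm (updateSymm M i j x) i j y = updateSymm M i j y := by
  ext a b
  simp only [updateSymm, of_apply]
  split_ifs <;> rfl

lemma updateSymm_eq_self {R : Type*} {M : Matrix ℕ ℕ R} (hM : M.IsSymm) :
    updateSymm M i j (M i j) = M := by
  ext a b
  by_cases hab : s(a, b) = s(i, j)
  · rw [updateSymm, of_apply, if_pos hab]
    rcases Sym2.eq_iff.1 hab with ⟨rfl, rfl⟩ | ⟨rfl, rfl⟩
    exacts [rfl, hM.apply _ _]
  · exact updateSymm_of_ne hab

lemma isSymm_updateSymm {R : Type*} {M : Matrix ℕ ℕ R} (hM : M.IsSymm) (x : R) :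
    (updateSymm M i j x).IsSymm := by
  ext a b
  simp only [transpose_apply, updateSymm, of_apply, hM.apply a b, Sym2.eq_swap (a := b)]

lemma map_updateSymm {R R' : Type*} (f : R → R') (M : Matrix ℕ ℕ R) (i j : ℕ) (x : R) :
    (updateSymm M i j x).map f = updateSymm (M.map f) i j (f x) := by
  ext a b
  exact apply_ite f ..

lemma borderedMinor_updateSymm {t : ℕ} {a b : Fin t → ℕ} (hij : i ≤ j) (ha : ∀ l, a l < i)
    (hb : ∀ l, b l < j) (x : T) :
    borderedMinor (updateSymm M i j x) i j a b =
      x * (M.submatrix a b).det + borderedMinor (updateSymm M i j 0) i j a b := by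
  let a' : Unit ⊕ Fin t → ℕ := Sum.elim (fun _ => i) a
  let b' : Unit ⊕ Fin t → ℕ := Sum.elim (fun _ => j) b
  let U := (updateSymm M i j 0).submatrix a' b'
  have hU : (updateSymm M i j x).submatrix a' b' =
      U.updateRow (.inl ()) (Pi.single (.inl ()) x + U (.inl ())) := by
    ext (l | l) (m | m)
    · simp [U, a', b', updateSymm_self]
    · simp [U, a', b', updateSymm_of_lt hij (.inr (.inl ⟨le_rfl, hb m⟩))]
    · simp [U, a', b', updateSymm_of_lt hij (.inl (ha l))]
    · simp [U, a', b', updateSymm_of_lt hij (.inl (ha l))]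
  have hsingle : U.updateRow (.inl ()) (Pi.single (.inl ()) x) =
      fromBlocks (of fun _ _ => x) 0 (M.submatrix a fun _ => j) (M.submatrix a b) := by
    ext (l | l) (m | m) <;> simp [U, a', b', updateSymm_of_lt hij (.inl (ha _))]
  rw [borderedMinor, hU, det_updateRow_add, hsingle, det_fromBlocks_zero₁₂, det_unique, of_apply,
    updateRow_eq_self]
  rfl

/-- The entries `M a j` with `a < i` of column `j`, extended by zero. -/
def truncCol {R : Type*} [Zero R] (i j : ℕ) (M : Matrix ℕ ℕ R) (a : ℕ) : R :=
  if a < i then M a j else 0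

/-- For a symmetric matrix with entry `s⁻¹` at `(i, j)`, the congruence clearing the entries above
`(i, j)` changes the top left `j × j` corner into a matrix `M`; `pivotSubst` recovers the corner
from `M`, polynomially in `s`. -/
def pivotSubst (i j : ℕ) (s : T) (M : Matrix ℕ ℕ T) : Matrix ℕ ℕ T :=
  of fun a b => if a < j ∧ b < j then
      if i < j then symmShear i (s • truncCol i j M) M a b
      else M a b + s * (truncCol i j M a * truncCol i j M b)
    else M a b

lemma pivotSubst_apply_of_lt (s : T) (hij : i < j) {a b : ℕ} (ha : a < j) (hb : b < j) :
    pivotSubst i j s M a b = symmShear i (s • truncCol i j M) M a b :=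
  (if_pos ⟨ha, hb⟩).trans (if_pos hij)

lemma pivotSubst_apply_of_le (s : T) (hij : j ≤ i) {a b : ℕ} (ha : a < j) (hb : b < j) :
    pivotSubst i j s M a b = M a b + s * (truncCol i j M a * truncCol i j M b) :=
  (if_pos ⟨ha, hb⟩).trans (if_neg hij.not_gt)

lemma pivotSubst_apply_of_not_lt (s : T) {a b : ℕ} (h : ¬(a < j ∧ b < j)) :
    pivotSubst i j s M a b = M a b := if_neg h

lemma truncCol_pivotSubst (s : T) : truncCol i j (pivotSubst i j s M) = truncCol i j M := by
  ext a
  rw [truncCol, pivotSubst_apply_of_not_lt s (by simp), truncCol]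

lemma smul_truncCol_self (M : Matrix ℕ ℕ T) (i j : ℕ) (s : T) : (s • truncCol i j M) i = 0 := by
  simp [truncCol]

lemma pivotSubst_zero : pivotSubst i j 0 M = M := by
  ext a b
  simp [pivotSubst, symmShear]

lemma pivotSubst_neg_pivotSubst (s : T) : pivotSubst i j (-s) (pivotSubst i j s M) = M := by
  ext a b
  by_cases hab : a < j ∧ b < j
  · obtain ⟨ha, hb⟩ := hab
    rcases lt_or_ge i j with hij | hij
    · conv_rhs => rw [← symmShear_neg_symmShear (M := M) (smul_truncCol_self M i j s)]
      simp only [pivotSubst_apply_of_lt _ hij ha hb, truncCol_pivotSubst, neg_smul, symmShear,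
        of_apply, pivotSubst_apply_of_lt _ hij ha hij, pivotSubst_apply_of_lt _ hij hij hb,
        pivotSubst_apply_of_lt _ hij hij hij]
    · rw [pivotSubst_apply_of_le _ hij ha hb, pivotSubst_apply_of_le _ hij ha hb,
        truncCol_pivotSubst]
      ring
  · rw [pivotSubst_apply_of_not_lt _ hab, pivotSubst_apply_of_not_lt _ hab]

lemma map_pivotSubst {T' : Type*} [CommRing T'] (f : T →+* T') (s : T) :
    (pivotSubst i j s M).map f = pivotSubst i j (f s) (M.map f) := by
  ext a b
  simp [pivotSubst, symmShear, truncCol, apply_ite f]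

lemma isSymm_pivotSubst (hM : M.IsSymm) (s : T) : (pivotSubst i j s M).IsSymm := by
  ext a b
  by_cases hab : a < j ∧ b < j
  · obtain ⟨ha, hb⟩ := hab
    rcases lt_or_ge i j with hij | hij
    · simp only [transpose_apply, pivotSubst_apply_of_lt s hij ha hb,
        pivotSubst_apply_of_lt s hij hb ha, symmShear, of_apply, hM.apply a b, hM.apply a i,
        hM.apply i b]
      ring
    · rw [transpose_apply, pivotSubst_apply_of_le s hij ha hb, pivotSubst_apply_of_le s hij hb ha,
        hM.apply a b, mul_comm (truncCol i j M a)]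
  · rw [transpose_apply, pivotSubst_apply_of_not_lt s hab,
      pivotSubst_apply_of_not_lt s (mt And.symm hab), hM.apply a b]

lemma CornerRankLE.pivotSubst_wide (h : CornerRankLE M k (j + 1) r) (hki : k ≤ i) (hij : i ≤ j)
    (s : T) : CornerRankLE (pivotSubst i j s M) k (j + 1) r := by
  let c (b : ℕ) : T := if b < j then s * truncCol i j M b else 0
  rcases hij.lt_or_eq with hij | rfl
  · let d (b : ℕ) : T :=
      if b < j then s * M i b + s * (s * truncCol i j M b) * M i i else 0
    refine ((h.add_mul_col (hij.trans (Nat.lt_succ_self j)) c).add_mul_col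
      (Nat.lt_succ_self j) d).congr fun a ha b _ => ?_
    have hai : truncCol i j M a = M a j := if_pos (ha.trans_le hki)
    by_cases hb : b < j
    · simp only [pivotSubst_apply_of_lt s hij ((ha.trans_le hki).trans hij) hb, symmShear, of_apply,
        Pi.smul_apply, smul_eq_mul, hai, c, d, if_pos hb, lt_irrefl, if_false]
      ring
    · simp [pivotSubst_apply_of_not_lt s (mt And.right hb), c, d, hb]
  · refine (h.add_mul_col (Nat.lt_succ_self i) c).congr fun a ha b _ => ?_
    have hai : truncCol i i M a = M a i := if_pos (ha.trans_le hki)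
    by_cases hb : b < i
    · rw [pivotSubst_apply_of_le s le_rfl (ha.trans_le hki) hb, of_apply, hai]
      simp only [c, if_pos hb]
      ring
    · simp [pivotSubst_apply_of_not_lt s (mt And.right hb), c, hb]

lemma cornerRankLE_pivotSubst_wide_iff (hki : k ≤ i) (hij : i ≤ j) (s : T) :
    CornerRankLE (pivotSubst i j s M) k (j + 1) r ↔ CornerRankLE M k (j + 1) r :=
  ⟨fun h => pivotSubst_neg_pivotSubst (M := M) s ▸ h.pivotSubst_wide hki hij (-s),
    fun h => h.pivotSubst_wide hki hij s⟩

lemma cornerRankLE_pivotSubst_square_iff (hik : i < k) (hkj : k ≤ j) (s : T) :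
    CornerRankLE (pivotSubst i j s M) k j r ↔ CornerRankLE M k j r := by
  have hij := hik.trans_le hkj
  rw [← cornerRankLE_symmShear_iff (M := M) hik hij (smul_truncCol_self M i j s)]
  have heq (a) (ha : a < k) (b) (hb : b < j) :=
    pivotSubst_apply_of_lt (M := M) s hij (ha.trans_le hkj) hb
  exact ⟨fun h => h.congr fun a ha b hb => (heq a ha b hb).symm, fun h => h.congr heq⟩

lemma symmShear_neg_updateSymm_pivotSubst (hM : M.IsSymm) (hij : i ≤ j) {s x : T}
    (hs : s * x = 1) {a b : ℕ} (ha : a < i) (hb : b < j) :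
    symmShear i (-(s • truncCol i j M)) (updateSymm (pivotSubst i j s M) i j x) a b = M a b := by
  have haj := ha.trans_le hij
  have hW {c d : ℕ} (h : c < i ∨ (c ≤ i ∧ d < j) ∨ (c < j ∧ d < j)) :
      updateSymm (pivotSubst i j s M) i j x c d = pivotSubst i j s M c d := updateSymm_of_lt hij h
  rcases hij.lt_or_eq with hlt | rfl
  · rw [← congr_fun₂ (symmShear_neg_symmShear (M := M) (smul_truncCol_self M i j s)) a b,
      symmShear, symmShear, of_apply, of_apply, hW (.inl ha), hW (.inr (.inl ⟨le_rfl, hb⟩)),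
      hW (.inl ha), hW (.inr (.inr ⟨hlt, hlt⟩)), pivotSubst_apply_of_lt s hlt haj hb,
      pivotSubst_apply_of_lt s hlt hlt hb, pivotSubst_apply_of_lt s hlt haj hlt,
      pivotSubst_apply_of_lt s hlt hlt hlt]
  · have hib : pivotSubst i i s M i b = truncCol i i M b := by
      rw [pivotSubst_apply_of_not_lt s (by simp), truncCol, if_pos hb, hM.apply]
    have hai : pivotSubst i i s M a i = truncCol i i M a := by
      rw [pivotSubst_apply_of_not_lt s (by simp), truncCol, if_pos ha]
    simp only [symmShear, of_apply, hW (.inl ha), hW (.inr (.inl ⟨le_rfl, hb⟩)), updateSymm_self,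
      hib, hai, pivotSubst_apply_of_le s le_rfl ha hb, Pi.neg_apply, Pi.smul_apply, smul_eq_mul]
    linear_combination (s * truncCol i i M a * truncCol i i M b) * hs

lemma cornerRankLE_updateSymm_pivotSubst_iff (hM : M.IsSymm) (hij : i ≤ j) {s x : T}
    (hs : s * x = 1) :
    CornerRankLE (updateSymm (pivotSubst i j s M) i j x) (i + 1) (j + 1) (r + 1) ↔
      CornerRankLE M i j r := by
  let u := -(s • truncCol i j M)
  have hui : u i = 0 := neg_eq_zero.2 (smul_truncCol_self M i j s)
  have huj : u j = 0 := by simp [u, truncCol, hij.not_gt]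
  rw [← cornerRankLE_symmShear_iff (Nat.lt_succ_self i) (Nat.lt_succ_of_le hij) hui,
    cornerRankLE_succ_succ_iff]
  · have heq (a) (ha : a < i) (b) (hb : b < j) :=
      symmShear_neg_updateSymm_pivotSubst hM hij hs ha hb
    exact ⟨fun h => h.congr fun a ha b hb => (heq a ha b hb).symm, fun h => h.congr heq⟩
  · intro a ha
    have hua : u a = -(s * M a j) := by simp [u, truncCol, ha]
    rw [symmShear, of_apply, huj, hua, updateSymm_self, updateSymm_of_lt hij (.inl ha),
      pivotSubst_apply_of_not_lt s (by simp)]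
    linear_combination (-M a j) * hs
  · rw [symmShear, of_apply, hui, huj, updateSymm_self]
    simpa using IsUnit.of_mul_eq_one_right s hs

/-- The matrix with entry `1` at `(a, b)` if `h a = h b ≠ 0` and `0` elsewhere: the Gram matrix of
standard basis vectors (or zero), used as a point at which prescribed minors do not vanish. -/
def levelMatrix (T : Type*) [CommRing T] (h : ℕ → ℕ) : Matrix ℕ ℕ T :=
  of fun a b => if h a = h b ∧ h a ≠ 0 then 1 else 0

lemma isSymm_levelMatrix (h : ℕ → ℕ) : (levelMatrix T h).IsSymm := by
  ext a b
  exact if_congr ⟨fun H => ⟨H.1.symm, H.1 ▸ H.2⟩, fun H => ⟨H.1.symm, H.1 ▸ H.2⟩⟩ rfl rfl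

lemma cornerRankLE_levelMatrix {h : ℕ → ℕ} (hr : ∀ a < k, h a ≤ r) (w : ℕ) :
    CornerRankLE (levelMatrix T h) k w r := by
  refine (CornerRankLE.self (of fun m b => if h b = m + 1 then 1 else 0) r w).of_rows_eq_sum
    (fun a m => if h a = m + 1 then 1 else 0) fun a ha b _ => ?_
  simp only [levelMatrix, of_apply, mul_ite, mul_one, mul_zero, ← ite_and]
  rcases hm : h a with _ | m
  · simp
  · have hmr : m < r := hm.symm.trans_le (hr a ha)
    rw [Finset.sum_eq_single_of_mem m (Finset.mem_range.2 hmr) fun m' _ hne => ?_]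
    · exact if_congr (by omega) rfl rfl
    · exact if_neg fun H => by omega

lemma submatrix_levelMatrix_eq_one {h : ℕ → ℕ} {t : ℕ} {a : Fin t → ℕ}
    (ha : ∀ l, h (a l) = l + 1) : (levelMatrix T h).submatrix a a = 1 := by
  ext l m
  rw [submatrix_apply, one_apply, levelMatrix, of_apply, ha, ha]
  exact if_congr (by simp [Fin.ext_iff]) rfl rfl

end CornerRank

section RankBounded

open Matrix

variable {T : Type*} [CommRing T] {M M' : Matrix ℕ ℕ T} {g : ℕ → ℕ} {i j k p p' : ℕ}

/-- The rank conditions imposed by the rank function `g` on the columns `0, …, j`: the top left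
`k × j` corner has rank at most `g k` for `k ≤ j`, and so has the `k × (j + 1)` corner for
`k ≤ p`. -/
structure RankBounded (j p : ℕ) (g : ℕ → ℕ) (M : Matrix ℕ ℕ T) : Prop where
  square : ∀ k ≤ j, CornerRankLE M k j (g k)
  wide : ∀ k ≤ p, CornerRankLE M k (j + 1) (g k)

lemma RankBounded.congr (h : RankBounded j p g M)
    (hM : ∀ a b, a < j ∧ b < j ∨ a < p ∧ b ≤ j → M' a b = M a b) : RankBounded j p g M' where
  square k hk := (h.square k hk).congr fun a ha b hb => hM a b (.inl ⟨ha.trans_le hk, hb⟩)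
  wide k hk := (h.wide k hk).congr fun a ha b hb =>
    hM a b (.inr ⟨ha.trans_le hk, Nat.lt_succ_iff.1 hb⟩)

lemma RankBounded.anti (h : RankBounded j p g M) (hp : p' ≤ p) : RankBounded j p' g M where
  square := h.square
  wide k hk := h.wide k (hk.trans hp)

lemma rankBounded_updateSymm_iff (hij : i ≤ j) (hp : p ≤ i) {x : T} :
    RankBounded j p g (updateSymm M i j x) ↔ RankBounded j p g M := by
  have heq (a b) (hab : a < j ∧ b < j ∨ a < p ∧ b ≤ j) : updateSymm M i j x a b = M a b :=
    updateSymm_of_lt hij (by omega)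
  exact ⟨fun h => h.congr fun a b hab => (heq a b hab).symm, fun h => h.congr heq⟩

lemma rankBounded_succ_left_iff : RankBounded (j + 1) 0 g M ↔ RankBounded j (j + 1) g M := by
  constructor <;> intro h
  · exact ⟨fun l hl => (h.square l (hl.trans (Nat.le_succ j))).mono le_rfl (Nat.le_succ j),
      h.square⟩
  · exact ⟨h.wide, fun l hl => (CornerRankLE.self M l _).le (hl.trans (Nat.zero_le _))⟩

lemma rankBounded_succ_right_iff (hgi : g (i + 1) = g i + 1) :
    RankBounded j (i + 1) g M ↔ RankBounded j i g M := by
  refine ⟨fun h => h.anti (Nat.le_succ i), fun h => ⟨h.square, fun l hl => ?_⟩⟩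
  rcases hl.lt_or_eq with hl | rfl
  · exact h.wide l (Nat.lt_succ_iff.1 hl)
  · exact hgi ▸ (h.wide i le_rfl).succ_row

/-- `k` is the last jump of the rank function `g` before `i`, a jump of height one. -/
structure IsLastJump (g : ℕ → ℕ) (k i : ℕ) : Prop where
  lt : k < i
  eq_succ : ∀ l, k < l → l ≤ i + 1 → g l = g k + 1

lemma IsLastJump.eq_left (h : IsLastJump g k i) : g i = g k + 1 :=
  h.eq_succ i h.lt (Nat.le_succ i)

lemma IsLastJump.eq_right (h : IsLastJump g k i) : g (i + 1) = g k + 1 :=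
  h.eq_succ (i + 1) (h.lt.trans (Nat.lt_succ_self i)) le_rfl

/-- The rank function `g` with its jump at `k` postponed to `i`. -/
def postponeJump (g : ℕ → ℕ) (k i l : ℕ) : ℕ := if k < l ∧ l ≤ i then g k else g l

lemma postponeJump_of_le {l : ℕ} (hl : l ≤ k) : postponeJump g k i l = g l :=
  if_neg fun h => h.1.not_ge hl

lemma postponeJump_of_lt {l : ℕ} (hl : i < l) : postponeJump g k i l = g l :=
  if_neg fun h => h.2.not_gt hl

lemma postponeJump_of_mem {l : ℕ} (hkl : k < l) (hli : l ≤ i) : postponeJump g k i l = g k :=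
  if_pos ⟨hkl, hli⟩

lemma RankBounded.updateSymm_pivotSubst (hk : IsLastJump g k i) (hij : i ≤ j) (hM : M.IsSymm)
    {s x : T} (hs : s * x = 1) (h : RankBounded j k (postponeJump g k i) M) :
    RankBounded j (i + 1) g (updateSymm (pivotSubst i j s M) i j x) := by
  have hcorner : CornerRankLE (updateSymm (pivotSubst i j s M) i j x) (i + 1) (j + 1) (g k + 1) :=
    (cornerRankLE_updateSymm_pivotSubst_iff hM hij hs).2
      (postponeJump_of_mem (g := g) hk.lt le_rfl ▸ h.square i hij)
  have hwide (l) (hl : l ≤ i + 1) :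
      CornerRankLE (updateSymm (pivotSubst i j s M) i j x) l (j + 1) (g l) := by
    rcases le_or_gt l k with hlk | hkl
    · have hli := hlk.trans hk.lt.le
      refine ((cornerRankLE_pivotSubst_wide_iff hli hij s).2
        (postponeJump_of_le (g := g) hlk ▸ h.wide l hlk)).congr fun a ha b _ =>
          updateSymm_of_lt hij (.inl (ha.trans_le hli))
    · exact hk.eq_succ l hkl hl ▸ hcorner.mono hl le_rfl
  refine ⟨fun l hl => ?_, hwide⟩
  rcases le_or_gt l (i + 1) with hli | hil
  · exact (hwide l hli).mono le_rfl (Nat.le_succ j)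
  · have hil := (Nat.lt_succ_self i).trans hil
    exact ((cornerRankLE_pivotSubst_square_iff hil hl s).2
      (postponeJump_of_lt (g := g) hil ▸ h.square l hl)).congr fun a ha b hb =>
        updateSymm_of_lt hij (.inr (.inr ⟨ha.trans_le hl, hb⟩))

lemma RankBounded.of_updateSymm_pivotSubst (hk : IsLastJump g k i) (hij : i ≤ j) (hM : M.IsSymm)
    {s x : T} (hs : s * x = 1)
    (h : RankBounded j (i + 1) g (updateSymm (pivotSubst i j s M) i j x)) :
    RankBounded j k (postponeJump g k i) M := by
  have hcorner : CornerRankLE M i j (g k) :=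
    (cornerRankLE_updateSymm_pivotSubst_iff hM hij hs).1 (hk.eq_right ▸ h.wide (i + 1) le_rfl)
  have hwide (l) (hl : l ≤ k) : CornerRankLE M l (j + 1) (postponeJump g k i l) := by
    have hli := hl.trans hk.lt.le
    rw [postponeJump_of_le hl, ← cornerRankLE_pivotSubst_wide_iff hli hij s]
    exact (h.wide l (hli.trans (Nat.le_succ i))).congr fun a ha b _ =>
      (updateSymm_of_lt hij (.inl (ha.trans_le hli))).symm
  refine ⟨fun l hl => ?_, hwide⟩
  rcases le_or_gt l k with hlk | hkl
  · exact (hwide l hlk).mono le_rfl (Nat.le_succ j)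
  rcases le_or_gt l i with hli | hil
  · exact postponeJump_of_mem (g := g) hkl hli ▸ hcorner.mono hli le_rfl
  · rw [postponeJump_of_lt hil, ← cornerRankLE_pivotSubst_square_iff hil hl s]
    exact (h.square l hl).congr fun a ha b hb =>
      (updateSymm_of_lt hij (.inr (.inr ⟨ha.trans_le hl, hb⟩))).symm

lemma CornerRankLE.exists_updateSymm {q : ℕ} {a b : Fin q → ℕ} (hij : i ≤ j)
    (hwide : CornerRankLE M i (j + 1) q) (htall : CornerRankLE M (i + 1) j q)
    (ha : ∀ l, a l < i) (hb : ∀ l, b l < j) (hab : IsUnit (M.submatrix a b).det) :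
    ∃ x, CornerRankLE (updateSymm M i j x) (i + 1) (j + 1) q := by
  let x := -borderedMinor (updateSymm M i j 0) i j a b * ↑hab.unit⁻¹
  have hx : borderedMinor (updateSymm M i j x) i j a b = 0 := by
    rw [borderedMinor_updateSymm hij ha hb, mul_assoc, hab.val_inv_mul, mul_one, neg_add_cancel]
  have hsub : (updateSymm M i j x).submatrix a b = M.submatrix a b :=
    ext fun l m => updateSymm_of_lt hij (.inl (ha l))
  have hwide' : CornerRankLE (updateSymm M i j x) i (j + 1) q :=
    hwide.congr fun c hc d _ => updateSymm_of_lt hij (.inl hc)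
  have htall' : CornerRankLE (updateSymm M i j x) (i + 1) j q :=
    htall.congr fun c hc d hd => updateSymm_of_lt hij (.inr (.inl ⟨Nat.lt_succ_iff.1 hc, hd⟩))
  refine ⟨x, .of_borderedMinor (hsub ▸ hab) fun c hc d hd => ?_⟩
  rcases (Nat.lt_succ_iff.1 hc).lt_or_eq with hci | rfl
  · exact hwide'.borderedMinor_eq_zero hci hd ha fun l => (hb l).trans (Nat.lt_succ_self j)
  rcases (Nat.lt_succ_iff.1 hd).lt_or_eq with hdj | rfl
  · exact htall'.borderedMinor_eq_zero hc hdj (fun l => (ha l).trans (Nat.lt_succ_self c)) hb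
  · exact hx

lemma RankBounded.exists_updateSymm (hM : M.IsSymm) (hij : i ≤ j) (hg : g i = g (i + 1))
    (h : RankBounded j i g M) {a b : Fin (g i) → ℕ}
    (ha : ∀ l, a l < i) (hb : ∀ l, b l < j) (hab : IsUnit (M.submatrix a b).det) :
    ∃ x, RankBounded j (i + 1) g (updateSymm M i j x) := by
  have hwide := h.wide i le_rfl
  have htall : CornerRankLE M (i + 1) j (g i) := by
    rcases hij.lt_or_eq with hij | rfl
    · exact hg ▸ h.square (i + 1) hij
    · exact hM.eq ▸ hwide.transpose
  obtain ⟨x, hx⟩ := hwide.exists_updateSymm hij htall ha hb hab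
  refine ⟨x, (((rankBounded_updateSymm_iff hij le_rfl).2 h).square), fun l hl => ?_⟩
  rcases hl.lt_or_eq with hl | rfl
  · exact ((rankBounded_updateSymm_iff hij le_rfl).2 h).wide l (Nat.lt_succ_iff.1 hl)
  · exact hg ▸ hx

/-- A rank function: it starts at `0` and is monotone with steps of height at most one. -/
structure IsUnitStep (g : ℕ → ℕ) : Prop where
  zero : g 0 = 0
  mono : Monotone g
  step : ∀ l, g (l + 1) ≤ g l + 1

lemma IsUnitStep.exists_eq (hg : IsUnitStep g) {l i : ℕ} (hl : l ≤ g i) : ∃ a ≤ i, g a = l := by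
  induction i with
  | zero => exact ⟨0, le_rfl, by have := hg.zero; omega⟩
  | succ i ih =>
    rcases le_or_gt l (g i) with h | h
    · obtain ⟨a, ha, rfl⟩ := ih h
      exact ⟨a, ha.trans (Nat.le_succ i), rfl⟩
    · exact ⟨i + 1, le_rfl, by have := hg.step i; omega⟩

lemma IsUnitStep.exists_isLastJump (hg : IsUnitStep g) (hgi : g i = g (i + 1)) (hgi0 : g i ≠ 0) :
    ∃ k, IsLastJump g k i := by
  let k := Nat.findGreatest (fun l => g l < g i) i
  have hk : g k < g i :=
    Nat.findGreatest_spec (P := fun l => g l < g i) (Nat.zero_le i) (by rw [hg.zero]; omega)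
  have hki : k < i := (Nat.findGreatest_le i).lt_of_ne fun h => hk.ne (congr_arg g h)
  have heq (l) (hkl : k < l) (hli : l ≤ i) : g l = g i :=
    (hg.mono hli).antisymm <| not_lt.1 <|
      Nat.findGreatest_is_greatest (P := fun l => g l < g i) hkl hli
  have hgk : g i = g k + 1 :=
    le_antisymm (heq (k + 1) (Nat.lt_succ_self k) hki ▸ hg.step k) hk
  refine ⟨k, hki, fun l hkl hl => ?_⟩
  rcases hl.lt_or_eq with hl | rfl
  · rw [heq l hkl (Nat.lt_succ_iff.1 hl), hgk]
  · rw [← hgi, hgk]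

lemma IsUnitStep.postponeJump (hg : IsUnitStep g) (hk : IsLastJump g k i) :
    IsUnitStep (postponeJump g k i) where
  zero := (postponeJump_of_le (Nat.zero_le k)).trans hg.zero
  mono := monotone_nat_of_le_succ fun l => by
    have := hg.mono (Nat.le_succ l)
    have := hk.eq_succ l
    have := hk.eq_succ (l + 1)
    unfold SymDet.postponeJump
    grind
  step l := by
    have := hg.step l
    have := hk.eq_succ l
    have := hk.eq_succ (l + 1)
    unfold SymDet.postponeJump
    grind

lemma IsUnitStep.exists_rankBounded (T : Type*) [CommRing T] (hg : IsUnitStep g) (hij : i ≤ j)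
    (hgi : g i = g (i + 1)) (hgi0 : g i ≠ 0) :
    ∃ (e : Fin (g i) → ℕ) (P : Matrix ℕ ℕ T), (∀ l, e l < i) ∧ P.IsSymm ∧
      RankBounded j (i + 1) g P ∧ P i j = 1 ∧ (P.submatrix e e).det = 1 := by
  let h (a : ℕ) : ℕ := g (min (a + 1) (i + 1))
  have hjump (l : Fin (g i)) : ∃ a < i, g (a + 1) = l + 1 := by
    obtain ⟨_ | a, ha, hal⟩ := hg.exists_eq l.2
    · exact absurd (hg.zero.symm.trans hal) (Nat.succ_ne_zero _).symm
    · exact ⟨a, ha, hal⟩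
  choose e he hge using hjump
  have hcorner (k w) : CornerRankLE (levelMatrix T h) k w (g k) :=
    cornerRankLE_levelMatrix (fun a ha => hg.mono ((min_le_left _ _).trans ha)) w
  refine ⟨e, levelMatrix T h, he, isSymm_levelMatrix h,
    ⟨fun k _ => hcorner k j, fun k _ => hcorner k (j + 1)⟩, ?_, ?_⟩
  · refine if_pos ⟨?_, ?_⟩
    · simp only [h, min_self, min_eq_right (Nat.succ_le_succ hij)]
    · simpa only [h, min_self, ← hgi] using hgi0
  · rw [submatrix_levelMatrix_eq_one fun l => ?_, det_one]
    rw [← hge l, show h (e l) = _ from congr_arg g (min_eq_left (Nat.succ_le_succ (he l).le))]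

end RankBounded

section RankIdeal

open Matrix

variable {T : Type*} [CommRing T] {M : Matrix ℕ ℕ T} {g : ℕ → ℕ} {i j k p r w : ℕ}

/-- The ideal generated by the minors of size `r + 1` of the top left `k × w` corner of `M`. -/
def cornerIdeal (M : Matrix ℕ ℕ T) (k w r : ℕ) : Ideal T :=
  Ideal.span {f | ∃ a b : Fin (r + 1) → ℕ,
    (∀ l, a l < k) ∧ (∀ l, b l < w) ∧ (M.submatrix a b).det = f}

/-- The ideal defining the rank conditions `RankBounded j p g` on `M`. -/
def rankIdeal (j p : ℕ) (g : ℕ → ℕ) (M : Matrix ℕ ℕ T) : Ideal T :=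
  (⨆ k ≤ j, cornerIdeal M k j (g k)) ⊔ ⨆ k ≤ p, cornerIdeal M k (j + 1) (g k)

lemma cornerIdeal_le_ker_iff {T' : Type*} [CommRing T'] {f : T →+* T'} :
    cornerIdeal M k w r ≤ RingHom.ker f ↔ CornerRankLE (M.map f) k w r := by
  rw [cornerIdeal, Ideal.span_le]
  constructor
  · exact fun h a b ha hb => (f.map_det _).symm.trans (h ⟨a, b, ha, hb, rfl⟩)
  · rintro h _ ⟨a, b, ha, hb, rfl⟩
    exact (f.map_det _).trans (h a b ha hb)

lemma rankIdeal_le_ker_iff {T' : Type*} [CommRing T'] {f : T →+* T'} :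
    rankIdeal j p g M ≤ RingHom.ker f ↔ RankBounded j p g (M.map f) := by
  simp only [rankIdeal, sup_le_iff, iSup_le_iff, cornerIdeal_le_ker_iff]
  exact ⟨fun h => ⟨h.1, h.2⟩, fun h => ⟨h.square, h.wide⟩⟩

lemma rankIdeal_le_iff {J : Ideal T} :
    rankIdeal j p g M ≤ J ↔ RankBounded j p g (M.map (Ideal.Quotient.mk J)) := by
  rw [← rankIdeal_le_ker_iff, Ideal.mk_ker]

lemma rankBounded_map_mk (j p : ℕ) (g : ℕ → ℕ) (M : Matrix ℕ ℕ T) :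
    RankBounded j p g (M.map (Ideal.Quotient.mk (rankIdeal j p g M))) :=
  rankIdeal_le_iff.1 le_rfl

lemma rankIdeal_eq_of_iff {j' p' : ℕ} {g' : ℕ → ℕ}
    (h : ∀ J : Ideal T, RankBounded j p g (M.map (Ideal.Quotient.mk J)) ↔
      RankBounded j' p' g' (M.map (Ideal.Quotient.mk J))) :
    rankIdeal j p g M = rankIdeal j' p' g' M :=
  le_antisymm (rankIdeal_le_iff.2 ((h _).2 (rankBounded_map_mk ..)))
    (rankIdeal_le_iff.2 ((h _).1 (rankBounded_map_mk ..)))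

lemma rankIdeal_zero_zero : rankIdeal 0 0 g M = ⊥ :=
  le_bot_iff.1 (rankIdeal_le_iff.2
    ⟨fun l hl => (CornerRankLE.self _ l _).le (hl.trans (Nat.zero_le _)),
      fun l hl => (CornerRankLE.self _ l _).le (hl.trans (Nat.zero_le _))⟩)

lemma rankIdeal_succ_left : rankIdeal (j + 1) 0 g M = rankIdeal j (j + 1) g M :=
  rankIdeal_eq_of_iff fun _ => rankBounded_succ_left_iff

lemma map_cornerIdeal {T' : Type*} [CommRing T'] (f : T →+* T') :
    (cornerIdeal M k w r).map f = cornerIdeal (M.map f) k w r := by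
  rw [cornerIdeal, cornerIdeal, Ideal.map_span]
  congr 1
  ext y
  constructor
  · rintro ⟨_, ⟨a, b, ha, hb, rfl⟩, rfl⟩
    exact ⟨a, b, ha, hb, (f.map_det _).symm⟩
  · rintro ⟨a, b, ha, hb, rfl⟩
    exact ⟨_, ⟨a, b, ha, hb, rfl⟩, f.map_det _⟩

lemma map_rankIdeal {T' : Type*} [CommRing T'] (f : T →+* T') :
    (rankIdeal j p g M).map f = rankIdeal j p g (M.map f) := by
  simp only [rankIdeal, Ideal.map_sup, Ideal.map_iSup, map_cornerIdeal]

section Polynomial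

open Polynomial

/-- The matrix over `T[X]` obtained from `M` by placing the variable at `(i, j)` and `(j, i)`. -/
noncomputable def adjoinEntry (M : Matrix ℕ ℕ T) (i j : ℕ) : Matrix ℕ ℕ T[X] :=
  updateSymm (M.map C) i j X

lemma adjoinEntry_apply_of_ne {a b : ℕ} (h : s(a, b) ≠ s(i, j)) :
    adjoinEntry M i j a b = C (M a b) := updateSymm_of_ne h

lemma map_adjoinEntry {T' : Type*} [CommRing T'] (f : T[X] →+* T') :
    (adjoinEntry M i j).map f = updateSymm (M.map (f.comp C)) i j (f X) :=
  map_updateSymm f _ i j X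

lemma rankIdeal_le_comap_C (hij : i ≤ j) :
    rankIdeal j i g M ≤ (rankIdeal j (i + 1) g (adjoinEntry M i j)).comap C := by
  rw [← Ideal.mk_ker (I := rankIdeal j (i + 1) g (adjoinEntry M i j)), RingHom.comap_ker,
    rankIdeal_le_ker_iff, ← rankBounded_updateSymm_iff hij le_rfl (x := Ideal.Quotient.mk _ X),
    ← map_adjoinEntry]
  exact (rankBounded_map_mk ..).anti (Nat.le_succ i)

lemma borderedMinor_adjoinEntry (hij : i ≤ j) {t : ℕ} {a b : Fin t → ℕ} (ha : ∀ l, a l < i)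
    (hb : ∀ l, b l < j) :
    borderedMinor (adjoinEntry M i j) i j a b =
      C (M.submatrix a b).det * X + C (borderedMinor (updateSymm M i j 0) i j a b) := by
  rw [map_borderedMinor, map_updateSymm, map_zero, adjoinEntry,
    borderedMinor_updateSymm hij ha hb, mul_comm, RingHom.map_det]
  rfl

lemma exists_mul_X_add_mem_of_mem_leadingCoeffNth_one {I : Ideal T[X]} {c : T}
    (hc : c ∈ I.leadingCoeffNth 1) : ∃ r, C c * X + C r ∈ I := by
  obtain ⟨f, ⟨hdeg, hfI⟩, rfl⟩ := hc
  exact ⟨f.coeff 0, eq_X_add_C_of_degree_le_one (Polynomial.mem_degreeLE.1 hdeg) ▸ hfI⟩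

lemma mem_leadingCoeffNth_one_of_mul_X_add_mem {I : Ideal T[X]} {c r : T}
    (h : C c * X + C r ∈ I) : c ∈ I.leadingCoeffNth 1 :=
  ⟨_, ⟨Polynomial.mem_degreeLE.2 degree_linear_le, h⟩, by simp [lcoeff_apply]⟩

lemma det_submatrix_mem_leadingCoeffNth (hij : i ≤ j) {t : ℕ} (ht : g (i + 1) = t)
    {a b : Fin t → ℕ} (ha : ∀ l, a l < i) (hb : ∀ l, b l < j) :
    (M.submatrix a b).det ∈
      (rankIdeal j (i + 1) g (adjoinEntry M i j)).leadingCoeffNth 1 := by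
  have hfull := (rankBounded_map_mk j (i + 1) g (adjoinEntry M i j)).wide (i + 1) le_rfl
  rw [ht] at hfull
  have hborder := hfull.borderedMinor_eq_zero (Nat.lt_succ_self i) (Nat.lt_succ_self j)
    (fun l => (ha l).trans (Nat.lt_succ_self i)) fun l => (hb l).trans (Nat.lt_succ_self j)
  rw [← map_borderedMinor, Ideal.Quotient.eq_zero_iff_mem,
    borderedMinor_adjoinEntry hij ha hb] at hborder
  exact mem_leadingCoeffNth_one_of_mul_X_add_mem hborder

lemma rankIdeal_postponeJump_le_leadingCoeffNth (hk : IsLastJump g k i) (hij : i ≤ j) :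
    rankIdeal j k (postponeJump g k i) M ≤
      (rankIdeal j (i + 1) g (adjoinEntry M i j)).leadingCoeffNth 1 := by
  set J := (rankIdeal j (i + 1) g (adjoinEntry M i j)).leadingCoeffNth 1
  have hold : RankBounded j i g (M.map (Ideal.Quotient.mk J)) := by
    refine rankIdeal_le_iff.1 fun c hc => mem_leadingCoeffNth_one_of_mul_X_add_mem (r := 0) ?_
    rw [C_0, add_zero]
    exact Ideal.mul_mem_right _ _ (rankIdeal_le_comap_C hij hc)
  have hcorner : CornerRankLE (M.map (Ideal.Quotient.mk J)) i j (g k) := fun a b ha hb =>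
    ((Ideal.Quotient.mk J).map_det _).symm.trans (Ideal.Quotient.eq_zero_iff_mem.2
      (det_submatrix_mem_leadingCoeffNth hij hk.eq_right ha hb))
  refine rankIdeal_le_iff.2 ⟨fun l hl => ?_, fun l hl => ?_⟩
  · by_cases hkl : k < l ∧ l ≤ i
    · rw [postponeJump_of_mem hkl.1 hkl.2]
      exact hcorner.mono hkl.2 le_rfl
    · rw [postponeJump, if_neg hkl]
      exact hold.square l hl
  · rw [postponeJump_of_le hl]
    exact hold.wide l (hl.trans hk.lt.le)

end Polynomial

end RankIdeal

section GenericSymm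

open Matrix MvPolynomial

variable {R T T' : Type*} [CommRing R] [CommRing T] [CommRing T'] {s : Set (Sym2 ℕ)}
  {i j p : ℕ}

open scoped Classical in
/-- The symmetric matrix whose entries at the positions in `s` are independent variables, its
other entries being zero. -/
noncomputable def genericSymm (R : Type*) [CommRing R] (s : Set (Sym2 ℕ)) :
    Matrix ℕ ℕ (MvPolynomial s R) :=
  of fun a b => if h : s(a, b) ∈ s then X ⟨s(a, b), h⟩ else 0

lemma genericSymm_apply_of_mem {a b : ℕ} (h : s(a, b) ∈ s) :
    genericSymm R s a b = X ⟨s(a, b), h⟩ := dif_pos h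

lemma genericSymm_apply_of_notMem {a b : ℕ} (h : s(a, b) ∉ s) : genericSymm R s a b = 0 :=
  dif_neg h

lemma isSymm_genericSymm (R : Type*) [CommRing R] (s : Set (Sym2 ℕ)) :
    (genericSymm R s).IsSymm := by
  classical
  ext1 a b
  exact congr_arg (fun z => if h : z ∈ s then (X ⟨z, h⟩ : MvPolynomial s R) else 0) Sym2.eq_swap

lemma ringHom_ext_genericSymm {f f' : MvPolynomial s R →+* T} (hC : f.comp C = f'.comp C)
    (hM : (genericSymm R s).map f = (genericSymm R s).map f') : f = f' := by
  refine MvPolynomial.ringHom_ext' hC ?_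
  rintro ⟨⟨a, b⟩, h⟩
  exact genericSymm_apply_of_mem (R := R) h ▸ congr_fun₂ hM a b

/-- The evaluation of the generic symmetric matrix at the symmetric matrix `Q`. -/
noncomputable def symmEval (s : Set (Sym2 ℕ)) (c : R →+* T) (Q : Matrix ℕ ℕ T) :
    MvPolynomial s R →+* T :=
  eval₂Hom c fun z => Q z.1.inf z.1.sup

lemma symmEval_comp_C (c : R →+* T) (Q : Matrix ℕ ℕ T) : (symmEval s c Q).comp C = c :=
  RingHom.ext fun _ => eval₂Hom_C ..

lemma symmEval_genericSymm_apply (c : R →+* T) {Q : Matrix ℕ ℕ T} (hQ : Q.IsSymm) {a b : ℕ}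
    (h : s(a, b) ∈ s) : symmEval s c Q (genericSymm R s a b) = Q a b := by
  rw [genericSymm_apply_of_mem h, symmEval, eval₂Hom_X']
  rcases le_total a b with hab | hab
  · simp [hab]
  · simp [hab, hQ.apply]

lemma map_symmEval_genericSymm (c : R →+* T) {Q : Matrix ℕ ℕ T} (hQ : Q.IsSymm)
    (h : ∀ a b, s(a, b) ∉ s → Q a b = 0) : (genericSymm R s).map (symmEval s c Q) = Q := by
  ext a b
  by_cases hab : s(a, b) ∈ s
  · exact symmEval_genericSymm_apply c hQ hab
  · rw [map_apply, genericSymm_apply_of_notMem hab, map_zero, h a b hab]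

/-- The positions in `s` include those of all entries that `RankBounded j p` reads. -/
def CoversCorners (s : Set (Sym2 ℕ)) (j p : ℕ) : Prop :=
  ∀ a b, a < j ∧ b < j ∨ a < p ∧ b ≤ j → s(a, b) ∈ s

lemma CoversCorners.mem_of_ne (hs : CoversCorners s j i) (hij : i ≤ j) {a b : ℕ}
    (hab : a < j ∧ b < j ∨ a < i + 1 ∧ b ≤ j) (hne : s(a, b) ≠ s(i, j)) : s(a, b) ∈ s := by
  by_cases h : a < j ∧ b < j ∨ a < i ∧ b ≤ j
  · exact hs a b h
  · rw [Sym2.eq_swap]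
    rw [ne_eq, Sym2.eq_iff] at hne
    exact hs b a (by omega)

lemma CoversCorners.anti (hs : CoversCorners s j p) {p' : ℕ} (hp : p' ≤ p) :
    CoversCorners s j p' := fun a b hab => hs a b (by omega)

lemma CoversCorners.diff_singleton (hs : CoversCorners s j (i + 1)) (hij : i ≤ j) :
    CoversCorners (s \ {s(i, j)}) j i := fun a b hab =>
  ⟨hs a b (by omega), fun h => by rw [Set.mem_singleton_iff, Sym2.eq_iff] at h; omega⟩

section pivotHom

variable (f : MvPolynomial s R →+* T) (t : T)

/-- The homomorphism applying `pivotSubst i j t` to the generic symmetric matrix. -/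
noncomputable def pivotHom (i j : ℕ) (f : MvPolynomial s R →+* T) (t : T) :
    MvPolynomial s R →+* T :=
  symmEval s (f.comp C) (pivotSubst i j t ((genericSymm R s).map f))

lemma map_pivotHom (hs : CoversCorners s j p) :
    (genericSymm R s).map (pivotHom i j f t) = pivotSubst i j t ((genericSymm R s).map f) := by
  refine map_symmEval_genericSymm _ (isSymm_pivotSubst ((isSymm_genericSymm R s).map f) t)
    fun a b hab => ?_
  rw [pivotSubst_apply_of_not_lt t fun h => hab (hs a b (.inl h)), map_apply,
    genericSymm_apply_of_notMem hab, map_zero]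

lemma comp_pivotHom (h : T →+* T') :
    h.comp (pivotHom i j f t) = pivotHom i j (h.comp f) (h t) := by
  refine MvPolynomial.ringHom_ext (fun x => ?_) fun z => ?_
  · simp [pivotHom, symmEval]
  · have := congr_fun₂ (map_pivotSubst (i := i) (j := j) (M := (genericSymm R s).map f) h t)
      z.1.inf z.1.sup
    simpa [pivotHom, symmEval] using this

lemma pivotHom_zero (hs : CoversCorners s j p) : pivotHom i j f 0 = f :=
  ringHom_ext_genericSymm (symmEval_comp_C ..) (by rw [map_pivotHom f 0 hs, pivotSubst_zero])

lemma pivotHom_neg_pivotHom (hs : CoversCorners s j p) :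
    pivotHom i j (pivotHom i j f t) (-t) = f := by
  refine ringHom_ext_genericSymm ((symmEval_comp_C ..).trans (symmEval_comp_C ..)) ?_
  rw [map_pivotHom _ _ hs, map_pivotHom _ _ hs, pivotSubst_neg_pivotSubst]

end pivotHom

end GenericSymm

section SchurHom

open Matrix Polynomial

variable {R T : Type*} [CommRing R] [CommRing T] {s : Set (Sym2 ℕ)} {g : ℕ → ℕ} {i j k : ℕ}

lemma exists_minors_notMem_rankIdeal [Nontrivial R] (hs : CoversCorners s j i) (hg : IsUnitStep g)
    (hij : i ≤ j) (hgi : g i = g (i + 1)) (hgi0 : g i ≠ 0) :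
    ∃ e : Fin (g i) → ℕ, (∀ l, e l < i) ∧
      ((genericSymm R s).submatrix e e).det ∉ rankIdeal j i g (genericSymm R s) ∧
      borderedMinor (updateSymm (genericSymm R s) i j 0) i j e e ∉
        rankIdeal j i g (genericSymm R s) := by
  obtain ⟨e, P, he, hP, hPr, hPij, hdet⟩ := hg.exists_rankBounded R hij hgi hgi0
  have hej (l) := (he l).trans_le hij
  let v := symmEval s (RingHom.id R) P
  let Q := (genericSymm R s).map v
  have hQ : RankBounded j (i + 1) g (updateSymm Q i j 1) := hPr.congr fun a b hab => by
    by_cases hne : s(a, b) = s(i, j)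
    · rw [updateSymm, of_apply, if_pos hne, ← hPij]
      rcases Sym2.eq_iff.1 hne with ⟨rfl, rfl⟩ | ⟨rfl, rfl⟩
      exacts [rfl, hP.apply _ _]
    · rw [updateSymm_of_ne hne]
      exact symmEval_genericSymm_apply _ hP (hs.mem_of_ne hij hab hne)
  have hker : rankIdeal j i g (genericSymm R s) ≤ RingHom.ker v :=
    rankIdeal_le_ker_iff.2
      ((rankBounded_updateSymm_iff hij le_rfl).1 (hQ.anti (Nat.le_succ i)))
  have hQdet : (Q.submatrix e e).det = 1 := by
    rw [← hdet]
    congr 1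
    ext l m
    exact symmEval_genericSymm_apply _ hP (hs _ _ (.inl ⟨hej l, hej m⟩))
  refine ⟨e, he, fun h => one_ne_zero (α := R) ?_, fun h => one_ne_zero (α := R) ?_⟩
  · rw [← hQdet]
    exact (v.map_det _).symm.trans (hker h)
  · have h0 : borderedMinor (updateSymm Q i j 0) i j e e = 0 := by
      rw [← map_zero v, ← map_updateSymm, ← map_borderedMinor]
      exact hker h
    have h1 := (hgi ▸ hQ.wide (i + 1) le_rfl : CornerRankLE _ _ _ (g i)).borderedMinor_eq_zero
      (Nat.lt_succ_self i) (Nat.lt_succ_self j) (fun l => (he l).trans (Nat.lt_succ_self i))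
      fun l => (hej l).trans (Nat.lt_succ_self j)
    rwa [borderedMinor_updateSymm hij he hej, hQdet, h0, add_zero, one_mul] at h1

lemma rankIdeal_adjoinEntry_le_ker_iff (hs : CoversCorners s j i) (hk : IsLastJump g k i)
    (hij : i ≤ j) {f : MvPolynomial s R →+* T} {t x : T} (ht : t * x = 1) :
    rankIdeal j (i + 1) g (adjoinEntry (genericSymm R s) i j) ≤
        RingHom.ker (eval₂RingHom (pivotHom i j f t) x) ↔
      rankIdeal j k (postponeJump g k i) (genericSymm R s) ≤ RingHom.ker f := by
  have hM : ((genericSymm R s).map f).IsSymm := (isSymm_genericSymm R s).map f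
  have hmap : (adjoinEntry (genericSymm R s) i j).map (eval₂RingHom (pivotHom i j f t) x) =
      updateSymm (pivotSubst i j t ((genericSymm R s).map f)) i j x := by
    rw [map_adjoinEntry, eval₂RingHom_comp_C, map_pivotHom f t hs, coe_eval₂RingHom, eval₂_X]
  rw [rankIdeal_le_ker_iff, hmap, rankIdeal_le_ker_iff]
  exact ⟨.of_updateSymm_pivotSubst hk hij hM ht, .updateSymm_pivotSubst hk hij hM ht⟩

/-- The substitution `pivotHom` with the inverse of the entry at `(i, j)` as a new variable, on the
quotient by the ideal of the postponed rank function. -/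
noncomputable def schurHom (R : Type*) [CommRing R] (s : Set (Sym2 ℕ)) (g : ℕ → ℕ) (k i j : ℕ) :
    MvPolynomial s R →+*
      (MvPolynomial s R ⧸ rankIdeal j k (postponeJump g k i) (genericSymm R s))[X] :=
  pivotHom i j (C.comp (Ideal.Quotient.mk _)) X

lemma comp_schurHom
    (f : (MvPolynomial s R ⧸ rankIdeal j k (postponeJump g k i) (genericSymm R s))[X] →+* T) :
    f.comp (schurHom R s g k i j) =
      pivotHom i j (f.comp (C.comp (Ideal.Quotient.mk _))) (f X) :=
  comp_pivotHom ..

lemma rankIdeal_le_ker_eval₂RingHom_schurHom (hs : CoversCorners s j i) (hk : IsLastJump g k i)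
    (hij : i ≤ j)
    (f : (MvPolynomial s R ⧸ rankIdeal j k (postponeJump g k i) (genericSymm R s))[X] →+* T) {x : T}
    (hx : f X * x = 1) :
    rankIdeal j (i + 1) g (adjoinEntry (genericSymm R s) i j) ≤
      RingHom.ker (eval₂RingHom (f.comp (schurHom R s g k i j)) x) := by
  rw [comp_schurHom, rankIdeal_adjoinEntry_le_ker_iff hs hk hij hx]
  intro y hy
  rw [RingHom.mem_ker, RingHom.comp_apply, RingHom.comp_apply,
    Ideal.Quotient.eq_zero_iff_mem.2 hy, map_zero, map_zero]

lemma coeff_zero_schurHom (hs : CoversCorners s j i) (c : MvPolynomial s R) :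
    (schurHom R s g k i j c).coeff 0 = Ideal.Quotient.mk _ c := by
  have h : constantCoeff.comp (schurHom R s g k i j) = Ideal.Quotient.mk _ := by
    rw [comp_schurHom, constantCoeff_apply, coeff_X_zero, pivotHom_zero _ hs]
    exact RingHom.ext fun _ => coeff_C_zero
  exact RingHom.congr_fun h c

lemma surjective_eval₂RingHom_schurHom (hs : CoversCorners s j i) :
    Function.Surjective (eval₂RingHom (schurHom R s g k i j) X) := by
  set q := Ideal.Quotient.mk (rankIdeal j k (postponeJump g k i) (genericSymm R s))
  have h : (eval₂RingHom (schurHom R s g k i j) X).comp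
      (eval₂RingHom (pivotHom i j C (-X)) X) = mapRingHom q := by
    refine Polynomial.ringHom_ext' ?_ ?_
    · rw [RingHom.comp_assoc, eval₂RingHom_comp_C, comp_pivotHom, eval₂RingHom_comp_C, map_neg,
        coe_eval₂RingHom, eval₂_X, schurHom, pivotHom_neg_pivotHom _ _ hs]
      exact RingHom.ext fun c => (map_C q).symm
    · simp
  refine .of_comp (g := eval₂RingHom (pivotHom i j C (-X)) X) ?_
  rw [← RingHom.coe_comp, h]
  exact Polynomial.map_surjective q Ideal.Quotient.mk_surjective

lemma rankIdeal_le_ker_schurHom (hs : CoversCorners s j i) (hk : IsLastJump g k i) (hij : i ≤ j) :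
    rankIdeal j i g (genericSymm R s) ≤ RingHom.ker (schurHom R s g k i j) := by
  let E := MvPolynomial s R ⧸ rankIdeal j k (postponeJump g k i) (genericSymm R s)
  let f := algebraMap E[X] (Localization.Away (X : E[X]))
  have hf : Function.Injective f :=
    IsLocalization.injective _ (Submonoid.powers_le.2 monic_X.mem_nonZeroDivisors)
  obtain ⟨x, hx⟩ := (IsLocalization.Away.algebraMap_isUnit (S := Localization.Away (X : E[X]))
    (X : E[X])).exists_right_inv
  rw [← RingHom.ker_comp_of_injective _ hf]
  intro y hy
  have := rankIdeal_le_ker_eval₂RingHom_schurHom hs hk hij f hx (rankIdeal_le_comap_C hij hy)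
  simpa using this

lemma exists_ne_zero_rankBounded_updateSymm {F : Type*} [Field F] (hs : CoversCorners s j i)
    (hg : IsUnitStep g) (hij : i ≤ j) (hgi : g i = g (i + 1)) (hgi0 : g i ≠ 0)
    {f : MvPolynomial s R →+* F} (hf : RingHom.ker f = rankIdeal j i g (genericSymm R s)) :
    ∃ x ≠ 0, RankBounded j (i + 1) g (updateSymm ((genericSymm R s).map f) i j x) := by
  have := (f.comp MvPolynomial.C).domain_nontrivial
  obtain ⟨e, he, hdet, hborder⟩ := exists_minors_notMem_rankIdeal (R := R) hs hg hij hgi hgi0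
  have hej (l) := (he l).trans_le hij
  have hdet' : (((genericSymm R s).map f).submatrix e e).det ≠ 0 :=
    fun h => hdet (hf.le ((f.map_det _).trans h))
  obtain ⟨x, hx⟩ := (rankIdeal_le_ker_iff.1 hf.ge).exists_updateSymm
    ((isSymm_genericSymm R s).map f) hij hgi he hej hdet'.isUnit
  refine ⟨x, ?_, hx⟩
  rintro rfl
  have h0 := (hgi ▸ hx.wide (i + 1) le_rfl : CornerRankLE _ _ _ (g i)).borderedMinor_eq_zero
    (Nat.lt_succ_self i) (Nat.lt_succ_self j) (fun l => (he l).trans (Nat.lt_succ_self i))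
    fun l => (hej l).trans (Nat.lt_succ_self j)
  rw [← map_zero f, ← map_updateSymm, ← map_borderedMinor] at h0
  exact hborder (hf.le (h0.trans (map_zero f)))

lemma ker_schurHom_le_rankIdeal (hs : CoversCorners s j i) (hg : IsUnitStep g)
    (hk : IsLastJump g k i) (hij : i ≤ j) [(rankIdeal j i g (genericSymm R s)).IsPrime] :
    RingHom.ker (schurHom R s g k i j) ≤ rankIdeal j i g (genericSymm R s) := by
  set N := rankIdeal j i g (genericSymm R s)
  let ι := algebraMap (MvPolynomial s R ⧸ N) (FractionRing (MvPolynomial s R ⧸ N))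
  let β := ι.comp (Ideal.Quotient.mk N)
  have hβ : RingHom.ker β = N :=
    (RingHom.ker_comp_of_injective _ (IsFractionRing.injective _ _)).trans Ideal.mk_ker
  obtain ⟨x, hx0, hx⟩ := exists_ne_zero_rankBounded_updateSymm hs hg hij
    (hk.eq_left.trans hk.eq_right.symm) (hk.eq_left.trans_ne (Nat.succ_ne_zero _)) hβ
  let θ := pivotHom i j β (-x⁻¹)
  have hθ : pivotHom i j θ x⁻¹ = β := by
    simpa only [neg_neg] using pivotHom_neg_pivotHom β (-x⁻¹) hs
  have hker : rankIdeal j k (postponeJump g k i) (genericSymm R s) ≤ RingHom.ker θ := by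
    rw [← rankIdeal_adjoinEntry_le_ker_iff hs hk hij (inv_mul_cancel₀ hx0), hθ,
      rankIdeal_le_ker_iff, map_adjoinEntry, eval₂RingHom_comp_C, coe_eval₂RingHom, eval₂_X]
    exact hx
  have hcomp :
      (eval₂RingHom (Ideal.Quotient.lift _ θ hker) x⁻¹).comp (schurHom R s g k i j) = β := by
    rw [comp_schurHom, ← RingHom.comp_assoc, eval₂RingHom_comp_C, coe_eval₂RingHom, eval₂_X, ← hθ]
    rfl
  rw [← hβ, ← hcomp]
  exact (Ideal.ker_le_comap _).trans_eq (RingHom.comap_ker _ _)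

theorem isNormalDomain_quotient_rankIdeal_adjoinEntry (hs : CoversCorners s j i)
    (hg : IsUnitStep g) (hk : IsLastJump g k i) (hij : i ≤ j)
    (hold : IsNormalDomain (MvPolynomial s R ⧸ rankIdeal j i g (genericSymm R s)))
    (hpostponed : IsNormalDomain
      (MvPolynomial s R ⧸ rankIdeal j k (postponeJump g k i) (genericSymm R s))) :
    IsNormalDomain
      ((MvPolynomial s R)[X] ⧸ rankIdeal j (i + 1) g (adjoinEntry (genericSymm R s) i j)) := by
  have := hpostponed.1
  have := hpostponed.2
  have := hold.1
  have := (algebraMap R (MvPolynomial s R ⧸ rankIdeal j i g (genericSymm R s))).domain_nontrivial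
  have hprime := (Ideal.Quotient.isDomain_iff_prime _).1 hold.1
  have hker : RingHom.ker (schurHom R s g k i j) = rankIdeal j i g (genericSymm R s) :=
    le_antisymm (ker_schurHom_le_rankIdeal hs hg hk hij) (rankIdeal_le_ker_schurHom hs hk hij)
  let E := MvPolynomial s R ⧸ rankIdeal j k (postponeJump g k i) (genericSymm R s)
  have hX : algebraMap E[X] (FractionRing E[X]) X ≠ 0 :=
    (map_ne_zero_iff _ (IsFractionRing.injective _ _)).2 X_ne_zero
  refine isNormalDomain_quotient_of_eval₂_inv (F := FractionRing E[X]) (schurHom R s g k i j)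
    (by rwa [hker]) (surjective_eval₂RingHom_schurHom hs)
    (rankIdeal_le_ker_eval₂RingHom_schurHom hs hk hij _ (mul_inv_cancel₀ hX))
    (hker.le.trans (rankIdeal_le_comap_C hij)) (fun c hc => ?_) ?_
  · rw [coeff_zero_schurHom hs, Ideal.Quotient.eq_zero_iff_mem] at hc
    exact exists_mul_X_add_mem_of_mem_leadingCoeffNth_one
      (rankIdeal_postponeJump_le_leadingCoeffNth hk hij hc)
  · obtain ⟨e, he, hdet, -⟩ := exists_minors_notMem_rankIdeal (R := R) hs hg hij
      (hk.eq_left.trans hk.eq_right.symm) (hk.eq_left.trans_ne (Nat.succ_ne_zero _))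
    refine ⟨_, ?_, fun h => hdet (hker.le h)⟩
    rw [coeff_zero_schurHom hs, RingHom.map_det]
    have hcorner := (rankBounded_map_mk j k (postponeJump g k i) (genericSymm R s)).square i hij
    rw [postponeJump_of_mem hk.lt le_rfl] at hcorner
    exact hcorner.det_eq_zero_of_card (by simp [hk.eq_left]) he fun l => (he l).trans_le hij

end SchurHom

section Induction

open Matrix

variable {R T : Type*} [CommRing R] [CommRing T] {M : Matrix ℕ ℕ T} {s : Set (Sym2 ℕ)}
  {g : ℕ → ℕ} {i j p : ℕ}

section SplitVariable

open Polynomial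

lemma ringHom_ext_adjoinEntry (hij : s(i, j) ∉ s) {f f' : (MvPolynomial s R)[X] →+* T}
    (hC : (f.comp C).comp MvPolynomial.C = (f'.comp C).comp MvPolynomial.C)
    (hM : (adjoinEntry (genericSymm R s) i j).map f = (adjoinEntry (genericSymm R s) i j).map f') :
    f = f' := by
  refine Polynomial.ringHom_ext' (ringHom_ext_genericSymm hC ?_) ?_
  · ext a b
    by_cases hab : s(a, b) = s(i, j)
    · rw [map_apply, map_apply, genericSymm_apply_of_notMem (hab ▸ hij), map_zero, map_zero]
    · simpa only [map_apply, adjoinEntry_apply_of_ne hab, RingHom.comp_apply] using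
        congr_fun₂ hM a b
  · simpa only [map_apply, adjoinEntry, updateSymm_self] using congr_fun₂ hM i j

lemma exists_map_genericSymm_eq_adjoinEntry (R : Type*) [CommRing R] (hij : s(i, j) ∈ s) :
    ∃ f : MvPolynomial s R →+* (MvPolynomial ↑(s \ {s(i, j)}) R)[X],
      f.comp MvPolynomial.C = C.comp MvPolynomial.C ∧
        (genericSymm R s).map f = adjoinEntry (genericSymm R (s \ {s(i, j)})) i j := by
  have hsymm : (adjoinEntry (genericSymm R (s \ {s(i, j)})) i j).IsSymm :=
    isSymm_updateSymm ((isSymm_genericSymm R _).map C) X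
  refine ⟨symmEval s _ _, symmEval_comp_C .., map_symmEval_genericSymm _ hsymm fun a b hab => ?_⟩
  have hne : s(a, b) ≠ s(i, j) := fun h => hab (h ▸ hij)
  rw [adjoinEntry_apply_of_ne hne, genericSymm_apply_of_notMem fun h => hab h.1, C_0]

lemma exists_map_adjoinEntry_eq_genericSymm (R : Type*) [CommRing R] (s : Set (Sym2 ℕ))
    (i j : ℕ) :
    ∃ f : (MvPolynomial ↑(s \ {s(i, j)}) R)[X] →+* MvPolynomial s R,
      (f.comp C).comp MvPolynomial.C = MvPolynomial.C ∧
        (adjoinEntry (genericSymm R (s \ {s(i, j)})) i j).map f = genericSymm R s := by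
  have hM := isSymm_genericSymm R s
  let f := symmEval (s \ {s(i, j)}) MvPolynomial.C (updateSymm (genericSymm R s) i j 0)
  have hf : (genericSymm R (s \ {s(i, j)})).map f = updateSymm (genericSymm R s) i j 0 := by
    refine map_symmEval_genericSymm _ (isSymm_updateSymm hM 0) fun a b hab => ?_
    by_cases h : s(a, b) = s(i, j)
    · exact if_pos h
    · rw [updateSymm_of_ne h, genericSymm_apply_of_notMem fun hs => hab ⟨hs, h⟩]
  refine ⟨eval₂RingHom f (genericSymm R s i j), ?_, ?_⟩
  · rw [eval₂RingHom_comp_C, symmEval_comp_C]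
  · rw [map_adjoinEntry, eval₂RingHom_comp_C, hf, updateSymm_updateSymm, coe_eval₂RingHom,
      eval₂_X, updateSymm_eq_self hM]

lemma exists_ringEquiv_map_genericSymm_eq_adjoinEntry (R : Type*) [CommRing R]
    (hij : s(i, j) ∈ s) :
    ∃ e : MvPolynomial s R ≃+* (MvPolynomial ↑(s \ {s(i, j)}) R)[X],
      (genericSymm R s).map e = adjoinEntry (genericSymm R (s \ {s(i, j)})) i j := by
  obtain ⟨f, hfC, hf⟩ := exists_map_genericSymm_eq_adjoinEntry R hij
  obtain ⟨f', hfC', hf'⟩ := exists_map_adjoinEntry_eq_genericSymm R s i j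
  refine ⟨.ofRingHom f f' (ringHom_ext_adjoinEntry (fun h => h.2 rfl) ?_ ?_)
    (ringHom_ext_genericSymm ?_ ?_), hf⟩
  · rw [RingHom.comp_assoc, RingHom.comp_assoc, ← RingHom.comp_assoc _ _ f', hfC', hfC,
      RingHom.id_comp]
  · rw [RingHom.coe_comp, ← Matrix.map_map, hf', hf, RingHom.coe_id, Matrix.map_id]
  · rw [RingHom.comp_assoc, hfC, ← RingHom.comp_assoc, hfC', RingHom.id_comp]
  · rw [RingHom.coe_comp, ← Matrix.map_map, hf, hf', RingHom.coe_id, Matrix.map_id]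

lemma isNormalDomain_quotient_of_adjoinEntry (hij : s(i, j) ∈ s)
    (h : IsNormalDomain ((MvPolynomial ↑(s \ {s(i, j)}) R)[X] ⧸
      rankIdeal j p g (adjoinEntry (genericSymm R (s \ {s(i, j)})) i j))) :
    IsNormalDomain (MvPolynomial s R ⧸ rankIdeal j p g (genericSymm R s)) := by
  obtain ⟨e, he⟩ := exists_ringEquiv_map_genericSymm_eq_adjoinEntry R hij
  refine h.of_ringEquiv (Ideal.quotientEquiv _ _ e ?_).symm
  rw [map_rankIdeal]
  exact congr_arg _ he.symm

lemma isNormalDomain_quotient_rankIdeal_adjoinEntry_of_eq_zero (hM : M.IsSymm) (hij : i ≤ j)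
    (hgi : g i = 0) (hgi' : g (i + 1) = 0) (h : IsNormalDomain (T ⧸ rankIdeal j i g M)) :
    IsNormalDomain (T[X] ⧸ rankIdeal j (i + 1) g (adjoinEntry M i j)) := by
  let f := (Ideal.Quotient.mk (rankIdeal j i g M)).comp constantCoeff
  have hf : Function.Surjective f :=
    Ideal.Quotient.mk_surjective.comp constantCoeff_surjective
  have hX : X ∈ rankIdeal j (i + 1) g (adjoinEntry M i j) := by
    have hwide := (rankBounded_map_mk j (i + 1) g (adjoinEntry M i j)).wide (i + 1) le_rfl
    rw [hgi'] at hwide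
    rw [← Ideal.Quotient.eq_zero_iff_mem,
      ← hwide.apply_eq_zero (Nat.lt_succ_self i) (Nat.lt_succ_self j), map_apply, adjoinEntry,
      updateSymm_self]
  have hle : rankIdeal j (i + 1) g (adjoinEntry M i j) ≤ RingHom.ker f := by
    have : IsEmpty (Fin (g i)) := hgi ▸ Fin.isEmpty
    obtain ⟨x, hx⟩ := (rankBounded_map_mk j i g M).exists_updateSymm (hM.map _) hij
      (hgi.trans hgi'.symm) (a := isEmptyElim) (b := isEmptyElim) isEmptyElim isEmptyElim
      (by rw [det_isEmpty]; exact isUnit_one)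
    have hx0 : x = 0 := by
      rw [← updateSymm_self (M.map (Ideal.Quotient.mk (rankIdeal j i g M))) i j x]
      exact (hgi' ▸ hx.wide (i + 1) le_rfl).apply_eq_zero (Nat.lt_succ_self i) (Nat.lt_succ_self j)
    rw [rankIdeal_le_ker_iff, map_adjoinEntry]
    convert hx
    · ext; simp [f]
    · simp [f, hx0]
  have hker : RingHom.ker f = rankIdeal j (i + 1) g (adjoinEntry M i j) := by
    refine le_antisymm (fun q hq => ?_) hle
    rw [← q.X_mul_divX_add]
    exact add_mem (Ideal.mul_mem_right _ _ hX)
      (rankIdeal_le_comap_C hij (Ideal.Quotient.eq_zero_iff_mem.1 hq))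
  exact h.of_ringEquiv
    ((Ideal.quotEquivOfEq hker.symm).trans (RingHom.quotientKerEquivOfSurjective hf)).symm

end SplitVariable

theorem isNormalDomain_quotient_rankIdeal_succ (hij : i ≤ j)
    (ih : ∀ p ≤ i, ∀ {g : ℕ → ℕ} {s : Set (Sym2 ℕ)}, IsUnitStep g → s.Finite →
      CoversCorners s j p → IsNormalDomain (MvPolynomial s R ⧸ rankIdeal j p g (genericSymm R s)))
    (hg : IsUnitStep g) (hfin : s.Finite) (hs : CoversCorners s j (i + 1)) :
    IsNormalDomain (MvPolynomial s R ⧸ rankIdeal j (i + 1) g (genericSymm R s)) := by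
  by_cases hjump : g (i + 1) = g i + 1
  · rw [rankIdeal_eq_of_iff fun _ => rankBounded_succ_right_iff hjump]
    exact ih i le_rfl hg hfin (hs.anti (Nat.le_succ i))
  have hgi : g i = g (i + 1) := by
    have : g i ≤ g (i + 1) := hg.mono (Nat.le_succ i)
    have := hg.step i
    omega
  have hs' := hs.diff_singleton hij
  have hold := ih i le_rfl hg hfin.sdiff hs'
  refine isNormalDomain_quotient_of_adjoinEntry (hs i j (.inr ⟨Nat.lt_succ_self i, le_rfl⟩)) ?_
  by_cases hgi0 : g i = 0
  · exact isNormalDomain_quotient_rankIdeal_adjoinEntry_of_eq_zero (isSymm_genericSymm R _) hij hgi0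
      (hgi.symm.trans hgi0) hold
  · obtain ⟨k, hk⟩ := hg.exists_isLastJump hgi hgi0
    exact isNormalDomain_quotient_rankIdeal_adjoinEntry hs' hg hk hij hold
      (ih k hk.lt.le (hg.postponeJump hk) hfin.sdiff (hs'.anti hk.lt.le))

theorem isNormalDomain_quotient_rankIdeal_genericSymm [IsDomain R] [IsIntegrallyClosed R] :
    ∀ {j p : ℕ} {g : ℕ → ℕ} {s : Set (Sym2 ℕ)}, p ≤ j + 1 → IsUnitStep g → s.Finite →
      CoversCorners s j p → IsNormalDomain (MvPolynomial s R ⧸ rankIdeal j p g (genericSymm R s))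
  | 0, 0, _, s, _, _, hfin, _ => by
    have := hfin.to_subtype
    rw [rankIdeal_zero_zero]
    exact IsNormalDomain.of_ringEquiv ⟨inferInstance, isIntegrallyClosed_mvPolynomial s R⟩
      (RingEquiv.quotientBot _).symm
  | j + 1, 0, _, _, _, hg, hfin, hs => by
    rw [rankIdeal_succ_left]
    exact isNormalDomain_quotient_rankIdeal_genericSymm le_rfl hg hfin
      fun a b hab => hs a b (by omega)
  | j, i + 1, _, _, hi, hg, hfin, hs =>
    isNormalDomain_quotient_rankIdeal_succ (Nat.le_of_succ_le_succ hi)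
      (fun p hp _ _ => isNormalDomain_quotient_rankIdeal_genericSymm (by omega)) hg hfin hs
termination_by j p => (j, p)

end Induction

section MinorIdeal

open Matrix

variable {R T T' : Type*} [CommRing R] [CommRing T] [CommRing T'] {n t r : ℕ}

/-- The ideal generated by the minors of size `t` of `A`, with rows and columns taken in
increasing order. -/
def minorIdeal (A : Matrix (Fin n) (Fin n) T) (t : ℕ) : Ideal T :=
  Ideal.span {f | ∃ a b : Fin t → Fin n, StrictMono a ∧ StrictMono b ∧ f = (A.submatrix a b).det}

/-- The `n × n` symmetric matrix whose entries on and above the diagonal are independent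
variables. -/
noncomputable def symMatrix (R : Type*) [CommRing R] (n : ℕ) :
    Matrix (Fin n) (Fin n) (MvPolynomial (Sym2 (Fin n)) R) :=
  of fun i j => MvPolynomial.X s(i, j)

lemma det_submatrix_mem_minorIdeal (A : Matrix (Fin n) (Fin n) T) (a b : Fin t → Fin n) :
    (A.submatrix a b).det ∈ minorIdeal A t := by
  by_cases ha : Function.Injective a
  · by_cases hb : Function.Injective b
    · have hsorted : ((A.submatrix a b).submatrix (Tuple.sort a) (Tuple.sort b)).det ∈
          minorIdeal A t :=
        Ideal.subset_span ⟨a ∘ Tuple.sort a, b ∘ Tuple.sort b,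
          (Tuple.monotone_sort a).strictMono_of_injective (ha.comp (Tuple.sort a).injective),
          (Tuple.monotone_sort b).strictMono_of_injective (hb.comp (Tuple.sort b).injective), rfl⟩
      have hperm : ((A.submatrix a b).submatrix (Tuple.sort a) (Tuple.sort b)).det =
          (Tuple.sort b).sign * ((Tuple.sort a).sign * (A.submatrix a b).det) := by
        rw [← det_permute, ← det_permute', submatrix_submatrix]
        rfl
      have hsign (σ : Equiv.Perm (Fin t)) : IsUnit ((σ.sign : ℤ) : T) :=
        (Units.isUnit σ.sign).map (Int.castRingHom T)
      rwa [hperm, Ideal.unit_mul_mem_iff_mem _ (hsign _),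
        Ideal.unit_mul_mem_iff_mem _ (hsign _)] at hsorted
    · obtain ⟨l, m, hlm, hne⟩ := Function.not_injective_iff.1 hb
      rw [det_zero_of_column_eq hne fun _ => by simp only [submatrix_apply, hlm]]
      exact zero_mem _
  · obtain ⟨l, m, hlm, hne⟩ := Function.not_injective_iff.1 ha
    rw [det_zero_of_row_eq hne (by ext; simp only [submatrix_apply, hlm])]
    exact zero_mem _

lemma map_minorIdeal (f : T →+* T') {A : Matrix (Fin n) (Fin n) T} {M : Matrix ℕ ℕ T'}
    (hM : A.map f = M.submatrix Fin.val Fin.val) :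
    (minorIdeal A (r + 1)).map f = cornerIdeal M n n r := by
  have hdet (a b : Fin (r + 1) → Fin n) :
      f (A.submatrix a b).det = (M.submatrix (Fin.val ∘ a) (Fin.val ∘ b)).det := by
    rw [RingHom.map_det, RingHom.mapMatrix_apply, ← submatrix_map, hM, submatrix_submatrix]
  refine le_antisymm ?_ (Ideal.span_le.2 ?_)
  · rw [minorIdeal, Ideal.map_span, Ideal.span_le]
    rintro _ ⟨_, ⟨a, b, -, -, rfl⟩, rfl⟩
    exact Ideal.subset_span ⟨_, _, fun l => (a l).2, fun l => (b l).2, (hdet a b).symm⟩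
  · rintro _ ⟨a, b, ha, hb, rfl⟩
    have := Ideal.mem_map_of_mem f
      (det_submatrix_mem_minorIdeal A (fun l => ⟨a l, ha l⟩) fun l => ⟨b l, hb l⟩)
    rwa [hdet] at this

lemma rankBounded_min_iff {M : Matrix ℕ ℕ T} :
    RankBounded n 0 (min · r) M ↔ CornerRankLE M n n r := by
  refine ⟨fun h => (h.square n le_rfl).le (min_le_right n r), fun h => ⟨fun k hk => ?_, ?_⟩⟩
  · rcases le_total k r with hkr | hkr
    · exact (min_eq_left hkr).symm ▸ CornerRankLE.self M k n
    · exact (min_eq_right hkr).symm ▸ h.mono hk le_rfl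
  · exact fun k hk => (CornerRankLE.self M k _).le (hk.trans (Nat.zero_le _))

lemma rankIdeal_min (M : Matrix ℕ ℕ T) (n r : ℕ) :
    rankIdeal n 0 (min · r) M = cornerIdeal M n n r := by
  refine le_antisymm (rankIdeal_le_iff.2 (rankBounded_min_iff.2 ?_)) ?_
  · rw [← cornerIdeal_le_ker_iff, Ideal.mk_ker]
  · rw [← Ideal.mk_ker (I := rankIdeal n 0 (min · r) M), cornerIdeal_le_ker_iff]
    exact rankBounded_min_iff.1 (rankBounded_map_mk ..)

lemma isUnitStep_min (r : ℕ) : IsUnitStep (min · r) where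
  zero := Nat.zero_min r
  mono _ _ h := min_le_min_right r h
  step l := by omega

/-- The positions of the entries of the top left `n × n` corner of a symmetric matrix. -/
def squarePositions (n : ℕ) : Set (Sym2 ℕ) := Set.range (Sym2.map (Fin.val : Fin n → ℕ))

lemma coversCorners_squarePositions (n : ℕ) : CoversCorners (squarePositions n) n 0 := by
  rintro a b (⟨ha, hb⟩ | ⟨ha, -⟩)
  · exact ⟨s(⟨a, ha⟩, ⟨b, hb⟩), rfl⟩
  · exact absurd ha (Nat.not_lt_zero a)

lemma exists_ringEquiv_map_minorIdeal_symMatrix (R : Type*) [CommRing R] (n r : ℕ) :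
    ∃ e : MvPolynomial (Sym2 (Fin n)) R ≃+* MvPolynomial (squarePositions n) R,
      (minorIdeal (symMatrix R n) (r + 1)).map (e : _ →+* MvPolynomial (squarePositions n) R) =
        rankIdeal n 0 (min · r) (genericSymm R (squarePositions n)) := by
  let e : Sym2 (Fin n) ≃ squarePositions n :=
    .ofInjective _ (Sym2.map.injective Fin.val_injective)
  refine ⟨(MvPolynomial.renameEquiv R e).toRingEquiv, ?_⟩
  rw [rankIdeal_min]
  refine map_minorIdeal _ ?_
  ext1 i j
  exact (MvPolynomial.rename_X e s(i, j)).trans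
    (genericSymm_apply_of_mem (Set.mem_range_self s(i, j))).symm

end MinorIdeal

end SymDet

theorem stmt15_general {R : Type*} [CommRing R] [IsDomain R] [IsIntegrallyClosed R] (n t : ℕ)
    (ht : t ≠ 0) :
    IsDomain (MvPolynomial (Sym2 (Fin n)) R ⧸ SymDet.minorIdeal (SymDet.symMatrix R n) t) ∧
    IsIntegrallyClosed
      (MvPolynomial (Sym2 (Fin n)) R ⧸ SymDet.minorIdeal (SymDet.symMatrix R n) t) := by
  obtain ⟨r, rfl⟩ := Nat.exists_eq_succ_of_ne_zero ht
  obtain ⟨e, he⟩ := SymDet.exists_ringEquiv_map_minorIdeal_symMatrix R n r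
  have hnormal := SymDet.isNormalDomain_quotient_rankIdeal_genericSymm (R := R) (Nat.zero_le _)
    (SymDet.isUnitStep_min r) (Set.finite_range _) (SymDet.coversCorners_squarePositions n)
  exact hnormal.of_ringEquiv (Ideal.quotientEquiv _ _ e he.symm).symm

/-- **Theorem 2.1 (part).** For every `2 ≤ t ≤ n`, the determinantal ring `S/I_t` of the
generic symmetric matrix is a normal domain: it is an integral domain which is integrally
closed in its field of fractions. -/
theorem stmt15 {K : Type*} [Field K] (n t : ℕ) (ht2 : 2 ≤ t) (htn : t ≤ n) :
    IsDomain (MvPolynomial (Sym2 (Fin n)) K ⧸ minorsIdeal K n t) ∧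
    IsIntegrallyClosed (MvPolynomial (Sym2 (Fin n)) K ⧸ minorsIdeal K n t) :=
  stmt15_general n t (by omega)
end

section
/- For every t with 2 ≤ t ≤ n, the Krull dimension of the quotient ring S/I_t equals (2n+2-t)(t-1)/2. -/
/-!
A `K`-algebra map from `S / I_t` to a field `L` is a symmetric matrix over `L` of rank `< t`. If
such a matrix has rank `r`, then some `r` of its rows form a basis of its row space, the principal
block `N` they cut out is invertible, and the matrix is `Bᵀ N⁻¹ B`, where `B` consists of these `r`
rows. Hence all the entries are rational functions of the entries of `B`, which are indexed by the
unordered pairs meeting an `r`-element set `A`. As `N` is automatically symmetric and generically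
invertible, these entries of `B` can conversely be chosen algebraically independent. So the largest
transcendence degree of a residue field of `S / I_t`, which is its Krull dimension by Noether
normalization, is the number of pairs meeting a set with `t - 1` elements.
-/

open Matrix
open scoped Finset

section Rank

variable {m n L : Type*} [Field L] [Finite m] [Fintype n]

theorem exists_finset_linearIndependent_row (M : Matrix m n L) :
    ∃ s : Finset m, #s = M.rank ∧ LinearIndependent L (fun i : s => M.row i) ∧
      Submodule.span L (M.row '' s) = Submodule.span L (Set.range M.row) := by
  classical
  obtain ⟨s, -, -, hspan, hli⟩ :=
    exists_linearIndepOn_extension (linearIndepOn_empty L M.row) (Set.empty_subset Set.univ)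
  lift s to Finset m using s.toFinite
  have hs : Submodule.span L (M.row '' s) = Submodule.span L (Set.range M.row) :=
    le_antisymm (Submodule.span_mono (Set.image_subset_range _ _))
      (Submodule.span_le.2 (by rwa [← Set.image_univ]))
  refine ⟨s, ?_, hli, hs⟩
  rw [M.rank_eq_finrank_span_row, ← hs, Set.image_eq_range]
  exact (Fintype.card_coe s).symm.trans (finrank_span_eq_card hli).symm

theorem exists_strictMono_linearIndependent_row [LinearOrder m] {t : ℕ} {M : Matrix m n L}
    (ht : t ≤ M.rank) :
    ∃ a : Fin t → m, StrictMono a ∧ LinearIndependent L (M.submatrix a id).row := by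
  obtain ⟨s, hs, hli, -⟩ := exists_finset_linearIndependent_row M
  obtain ⟨u, hus, hu⟩ := Finset.exists_subset_card_eq (ht.trans_eq hs.symm)
  let a := u.orderEmbOfFin hu
  exact ⟨a, a.strictMono, hli.comp (fun k => ⟨a k, hus (u.orderEmbOfFin_mem hu k)⟩)
    fun _ _ hkl => a.injective (by simpa using hkl)⟩

theorem rank_lt_iff_forall_det_submatrix_eq_zero [LinearOrder m] [LinearOrder n] {t : ℕ}
    (M : Matrix m n L) :
    M.rank < t ↔ ∀ (a : Fin t → m) (b : Fin t → n), StrictMono a → StrictMono b →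
      (M.submatrix a b).det = 0 := by
  refine ⟨fun h a b _ _ => ?_, fun h => ?_⟩
  · by_contra hdet
    have hrank := (rank_of_det_ne_zero hdet).symm.trans_le (M.rank_submatrix_le a b)
    exact h.not_ge (by simpa using hrank)
  · by_contra! ht
    obtain ⟨a, ha, hrows⟩ := exists_strictMono_linearIndependent_row ht
    have hrank : t ≤ (M.submatrix a id)ᵀ.rank := by
      rw [rank_transpose, hrows.rank_matrix, Fintype.card_fin]
    obtain ⟨b, hb, hcols⟩ := exists_strictMono_linearIndependent_row hrank
    have hunit : IsUnit (M.submatrix a b) := linearIndependent_cols_iff_isUnit.1 hcols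
    exact ((isUnit_iff_isUnit_det _).1 hunit).ne_zero (h a b ha hb)

end Rank

section SkeletonCompletion

variable {n κ L : Type*} [Field L] [Fintype κ] [DecidableEq κ] {a : κ → n}

/-- The symmetric matrix `Bᵀ N⁻¹ B` whose rows `a k` are the rows of `B`, where the square block
`N` formed by the columns `a k` of `B` is assumed to be symmetric and invertible. -/
noncomputable def skeletonCompletion (a : κ → n) (B : Matrix κ n L) : Matrix n n L :=
  Bᵀ * (B.submatrix id a)⁻¹ * B

theorem isSymm_skeletonCompletion {B : Matrix κ n L} (hB : (B.submatrix id a).IsSymm) :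
    (skeletonCompletion a B).IsSymm := by
  rw [IsSymm, skeletonCompletion, transpose_mul, transpose_mul, transpose_transpose,
    transpose_nonsing_inv, hB.eq, Matrix.mul_assoc]

theorem skeletonCompletion_submatrix {B : Matrix κ n L} (hB : (B.submatrix id a).IsSymm)
    (hunit : IsUnit (B.submatrix id a)) : (skeletonCompletion a B).submatrix a id = B := by
  calc (skeletonCompletion a B).submatrix a id
      = (B.submatrix id a)ᵀ * (B.submatrix id a)⁻¹ * B := rfl
    _ = B := by rw [hB.eq, mul_nonsing_inv _ ((isUnit_iff_isUnit_det _).1 hunit), Matrix.one_mul]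

theorem rank_skeletonCompletion_le [Fintype n] (B : Matrix κ n L) :
    (skeletonCompletion a B).rank ≤ Fintype.card κ :=
  (rank_mul_le_right _ _).trans B.rank_le_card_height

theorem skeletonCompletion_map {F : Type*} [Field F] (f : F →+* L) (B : Matrix κ n F) :
    skeletonCompletion a (B.map f) = (skeletonCompletion a B).map f := by
  have hinv (N : Matrix κ κ F) : (N.map f)⁻¹ = N⁻¹.map f := by
    rw [inv_def, inv_def, Ring.inverse_eq_inv', Ring.inverse_eq_inv', ← f.mapMatrix_apply N,
      ← f.map_det, ← f.map_adjugate, ← map_inv₀]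
    ext i j
    simp
  rw [skeletonCompletion, skeletonCompletion, Matrix.map_mul, Matrix.map_mul, ← hinv]
  rfl

theorem skeletonCompletion_apply_mem (F : Subfield L) {B : Matrix κ n L}
    (hB : ∀ k j, B k j ∈ F) (i j : n) : skeletonCompletion a B i j ∈ F := by
  let B' : Matrix κ n F := Matrix.of fun k j => ⟨B k j, hB k j⟩
  have hmap : skeletonCompletion a B = (skeletonCompletion a B').map F.subtype :=
    skeletonCompletion_map F.subtype B'
  rw [hmap, Matrix.map_apply]
  exact SetLike.coe_mem _

theorem eq_skeletonCompletion_of_eq_mul {M : Matrix n n L} (hM : M.IsSymm) {C : Matrix n κ L}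
    (hC : M = C * M.submatrix a id) (hunit : IsUnit (M.submatrix a a)) :
    M = skeletonCompletion a (M.submatrix a id) := by
  have hcols : (M.submatrix a id)ᵀ = C * M.submatrix a a :=
    calc (M.submatrix a id)ᵀ = M.submatrix id a := by rw [transpose_submatrix, hM.eq]
      _ = (C * M.submatrix a id).submatrix id a := by rw [← hC]
      _ = C * M.submatrix a a := rfl
  calc M = C * M.submatrix a id := hC
    _ = C * M.submatrix a a * (M.submatrix a a)⁻¹ * M.submatrix a id := by
      rw [mul_nonsing_inv_cancel_right _ _ ((isUnit_iff_isUnit_det _).1 hunit)]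
    _ = skeletonCompletion a (M.submatrix a id) := by rw [← hcols]; rfl

theorem isUnit_submatrix_of_linearIndependent_row {M : Matrix n n L} (hM : M.IsSymm)
    {C : Matrix n κ L} (hC : M = C * M.submatrix a id)
    (hli : LinearIndependent L (M.submatrix a id).row) : IsUnit (M.submatrix a a) := by
  have hrows : M.submatrix a id = M.submatrix a a * Cᵀ :=
    calc M.submatrix a id = Mᵀ.submatrix a id := by rw [hM.eq]
      _ = (C * M.submatrix a id)ᵀ.submatrix a id := by rw [← hC]
      _ = (M.submatrix a a)ᵀ * Cᵀ := by rw [transpose_mul]; rfl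
      _ = M.submatrix a a * Cᵀ := by rw [(hM.submatrix a).eq]
  rw [← vecMul_injective_iff_isUnit]
  refine .of_comp (f := (· ᵥ* Cᵀ)) ?_
  simpa only [Function.comp_def, vecMul_vecMul, ← hrows] using vecMul_injective_iff.2 hli

theorem exists_eq_skeletonCompletion [Fintype n] [DecidableEq n] {M : Matrix n n L}
    (hM : M.IsSymm) :
    ∃ s : Finset n, #s = M.rank ∧
      M = skeletonCompletion ((↑) : s → n) (M.submatrix ((↑) : s → n) id) := by
  obtain ⟨s, hs, hli, hspan⟩ := exists_finset_linearIndependent_row M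
  have hcoeff (i : n) : ∃ c : s → L, ∑ k, c k • M.row k = M.row i := by
    rw [← Submodule.mem_span_range_iff_exists_fun]
    change M.row i ∈ Submodule.span L (Set.range fun k : (s : Set n) => M.row k)
    rw [← Set.image_eq_range, hspan]
    exact Submodule.subset_span ⟨i, rfl⟩
  choose C hC using hcoeff
  have hfactor : M = Matrix.of C * M.submatrix ((↑) : s → n) id := by
    ext i j
    simpa [Matrix.mul_apply] using (congrFun (hC i) j).symm
  exact ⟨s, hs, eq_skeletonCompletion_of_eq_mul hM hfactor
    (isUnit_submatrix_of_linearIndependent_row hM hfactor hli)⟩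

theorem exists_finset_forall_apply_mem_of_rank_le [Fintype n] {M : Matrix n n L} (hM : M.IsSymm)
    {r : ℕ} (hr : M.rank ≤ r) (hrn : r ≤ Fintype.card n) :
    ∃ A : Finset n, #A = r ∧
      ∀ F : Subfield L, (∀ i ∈ A, ∀ j, M i j ∈ F) → ∀ i j, M i j ∈ F := by
  classical
  obtain ⟨s, hs, hMs⟩ := exists_eq_skeletonCompletion hM
  obtain ⟨A, hsA, -, hA⟩ :=
    Finset.exists_subsuperset_card_eq s.subset_univ (hs.trans_le hr) (by simpa using hrn)
  refine ⟨A, hA, fun F hF => ?_⟩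
  rw [hMs]
  exact skeletonCompletion_apply_mem F fun k => hF k (hsA k.2)

end SkeletonCompletion

section PairsMeeting

variable {α : Type*} [Fintype α] [DecidableEq α]

/-- The unordered pairs that meet `A`, that is, the positions in a symmetric matrix of the entries
lying in the rows indexed by `A`. -/
def pairsMeeting (A : Finset α) : Finset (Sym2 α) := {p | ∃ i ∈ A, i ∈ p}

theorem mem_pairsMeeting {A : Finset α} {p : Sym2 α} :
    p ∈ pairsMeeting A ↔ ∃ i ∈ A, i ∈ p := by
  simp [pairsMeeting]

theorem mk_mem_pairsMeeting {A : Finset α} {i : α} (hi : i ∈ A) (j : α) :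
    s(i, j) ∈ pairsMeeting A :=
  mem_pairsMeeting.2 ⟨i, hi, Sym2.mem_mk_left i j⟩

theorem compl_pairsMeeting (A : Finset α) : (pairsMeeting A)ᶜ = Aᶜ.sym2 := by
  ext p
  simp only [Finset.mem_compl, mem_pairsMeeting, Finset.mem_sym2_iff, not_exists, not_and]
  exact forall_congr' fun i => imp_not_comm

theorem card_pairsMeeting (A : Finset α) :
    #(pairsMeeting A) = (2 * Fintype.card α + 1 - #A) * #A / 2 := by
  have hcompl : #(pairsMeeting A) + (Fintype.card α - #A + 1).choose 2 =
      (Fintype.card α + 1).choose 2 := by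
    rw [← Sym2.card, ← Finset.card_add_card_compl (pairsMeeting A), compl_pairsMeeting,
      Finset.card_sym2, Finset.card_compl]
  have two_mul_choose (k : ℕ) : (k + 1).choose 2 * 2 = (k + 1) * k := by
    rw [Nat.choose_two_right, Nat.div_mul_cancel (Nat.even_mul_pred_self (k + 1)).two_dvd,
      Nat.add_sub_cancel]
  obtain ⟨m, hm⟩ := Nat.exists_eq_add_of_le A.card_le_univ
  rw [hm, Nat.add_sub_cancel_left] at hcompl
  rw [hm, show 2 * (#A + m) + 1 - #A = #A + 2 * m + 1 by lia]
  refine (Nat.div_eq_of_eq_mul_left two_pos ?_).symm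
  linarith [two_mul_choose m, two_mul_choose (#A + m)]

end PairsMeeting

section KrullDim

theorem ringKrullDim_eq_of_isIntegral (R S : Type*) [CommRing R] [CommRing S] [Algebra R S]
    [Algebra.IsIntegral R S] [FaithfulSMul R S] : ringKrullDim S = ringKrullDim R := by
  refine le_antisymm (Order.krullDim_le_of_strictMono (PrimeSpectrum.comap (algebraMap R S))
    fun _ _ hpq => Ideal.IsIntegral.comap_lt_comap hpq) (iSup_le fun l => ?_)
  obtain ⟨⟨Q, hQ⟩⟩ : Nonempty (l.head.asIdeal.primesOver S) := inferInstance
  have := hQ.1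
  have := hQ.2
  obtain ⟨l', hl', -⟩ := Ideal.exists_ltSeries_of_hasGoingUp l Q
  rw [← hl']
  exact Order.LTSeries.length_le_krullDim l'

theorem ringKrullDim_le_of_forall_isPrime {R : Type*} [CommRing R] {d : WithBot ℕ∞}
    (h : ∀ P : Ideal R, P.IsPrime → ringKrullDim (R ⧸ P) ≤ d) : ringKrullDim R ≤ d := by
  rw [ringKrullDim, Order.krullDim_eq_iSup_coheight]
  refine iSup_le fun p => ?_
  rw [Order.coheight_eq_krullDim_Ici]
  exact (ringKrullDim_quotient p.asIdeal).symm.trans_le (h p.asIdeal p.isPrime)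

variable (K A : Type*) [Field K] [CommRing A] [IsDomain A] [Algebra K A] [Algebra.FiniteType K A]

theorem ringKrullDim_eq_toNat_trdeg :
    ringKrullDim A = Cardinal.toNat (Algebra.trdeg K A) := by
  obtain ⟨s, g, hg, hgint⟩ := exists_integral_inj_algHom_of_fg K A
  algebraize [g.toRingHom]
  have : FaithfulSMul (MvPolynomial (Fin s) K) A :=
    (faithfulSMul_iff_algebraMap_injective _ _).2 hg
  have htrdeg := lift_trdeg_add_eq K (MvPolynomial (Fin s) K) A
  rw [trdeg_eq_zero (R := MvPolynomial (Fin s) K), MvPolynomial.trdeg_of_isDomain] at htrdeg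
  rw [ringKrullDim_eq_of_isIntegral (MvPolynomial (Fin s) K) A,
    MvPolynomial.ringKrullDim_of_isNoetherianRing, ringKrullDim_eq_zero_of_field, zero_add,
    Nat.card_fin, ← Cardinal.toNat_lift, ← htrdeg]
  simp

variable {K A}

theorem ringKrullDim_le_natCast_of_trdeg_le {d : ℕ} (h : Algebra.trdeg K A ≤ d) :
    ringKrullDim A ≤ d := by
  rw [ringKrullDim_eq_toNat_trdeg K A, Nat.cast_le]
  simpa using Cardinal.toNat_le_toNat h Cardinal.natCast_lt_aleph0

end KrullDim

theorem natCard_le_ringKrullDim_of_algebraicIndependent {K A F ι : Type*} [Field K] [CommRing A]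
    [Algebra K A] [Algebra.FiniteType K A] [CommRing F] [IsDomain F] [Algebra K F]
    (f : A →ₐ[K] F) {y : ι → A} (hy : AlgebraicIndependent K (f ∘ y)) :
    (Nat.card ι : WithBot ℕ∞) ≤ ringKrullDim A := by
  have : Algebra.FiniteType K f.range :=
    Algebra.FiniteType.of_surjective f.rangeRestrict f.rangeRestrict_surjective
  have hyr : AlgebraicIndependent K (f.rangeRestrict ∘ y) := .of_comp f.range.val hy
  have hcard : Nat.card ι ≤ Cardinal.toNat (Algebra.trdeg K f.range) := by
    simpa only [Nat.card, Cardinal.toNat_lift] using Cardinal.toNat_le_toNat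
      hyr.lift_cardinalMk_le_trdeg
      (Cardinal.lift_lt_aleph0.2 trdeg_lt_aleph0_of_finiteType)
  calc (Nat.card ι : WithBot ℕ∞) ≤ Cardinal.toNat (Algebra.trdeg K f.range) := mod_cast hcard
    _ = ringKrullDim f.range := (ringKrullDim_eq_toNat_trdeg K f.range).symm
    _ ≤ ringKrullDim A :=
      ringKrullDim_le_of_surjective f.rangeRestrict.toRingHom f.rangeRestrict_surjective

section Adjoin

universe v w

variable {K : Type*} {L : Type w} [Field K] [Field L] [Algebra K L]

open IntermediateField.algebraAdjoinAdjoin in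
theorem trdeg_adjoin_le (S : Set L) :
    Algebra.trdeg K (IntermediateField.adjoin K S) ≤ Cardinal.mk S := by
  let A := Algebra.adjoin K S
  have hsurj := AlgHom.rangeRestrict_surjective (MvPolynomial.aeval (R := K) ((↑) : S → L))
  have hA := lift_trdeg_le_of_surjective _ hsurj
  rw [← Algebra.adjoin_range_eq_range_aeval, Subtype.range_coe,
    MvPolynomial.trdeg_of_isDomain] at hA
  have hadd := trdeg_add_eq K A (A := IntermediateField.adjoin K S)
  rw [trdeg_eq_zero (R := A), add_zero] at hadd
  rw [← hadd]
  simpa using hA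

theorem lift_trdeg_le_of_forall_mem_adjoin {D : Type v} {ι : Type*} [CommRing D] [Algebra K D]
    [Algebra D L] [IsScalarTower K D L] [FaithfulSMul D L] {x : ι → D}
    (hx : Algebra.adjoin K (Set.range x) = ⊤) {S : Set L}
    (hS : ∀ i, algebraMap D L (x i) ∈ IntermediateField.adjoin K S) :
    Cardinal.lift.{w} (Algebra.trdeg K D) ≤ Cardinal.lift.{v} (Cardinal.mk S) := by
  let E := IntermediateField.adjoin K S
  let f := IsScalarTower.toAlgHom K D L
  have hE (d : D) : f d ∈ E.toSubalgebra := by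
    have : Algebra.adjoin K (Set.range x) ≤ E.toSubalgebra.comap f :=
      Algebra.adjoin_le (Set.range_subset_iff.2 hS)
    exact this (hx ▸ Algebra.mem_top)
  calc Cardinal.lift (Algebra.trdeg K D) ≤ Cardinal.lift (Algebra.trdeg K E) :=
        lift_trdeg_le_of_injective (f.codRestrict E.toSubalgebra hE)
          ((AlgHom.injective_codRestrict _ _ hE).2 (FaithfulSMul.algebraMap_injective D L))
    _ ≤ Cardinal.lift (Cardinal.mk S) := Cardinal.lift_le.2 (trdeg_adjoin_le S)

end Adjoin

section SymmetricMinors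

open MvPolynomial

theorem minorsIdeal_le_ker_iff {K L : Type*} [Field K] [Field L] [Algebra K L] {n t : ℕ}
    (φ : MvPolynomial (Sym2 (Fin n)) K →ₐ[K] L) :
    minorsIdeal K n t ≤ RingHom.ker φ ↔
      (Matrix.of fun i j => φ (X s(i, j)) : Matrix (Fin n) (Fin n) L).rank < t := by
  have map_symMinor (a b : Fin t → Fin n) : φ (symMinor K a b) =
      ((Matrix.of fun i j => φ (X s(i, j)) : Matrix (Fin n) (Fin n) L).submatrix a b).det := by
    rw [symMinor, AlgHom.map_det]
    rfl
  rw [rank_lt_iff_forall_det_submatrix_eq_zero, minorsIdeal, Ideal.span_le]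
  simp only [← map_symMinor]
  exact ⟨fun h a b ha hb => h ⟨a, b, ha, hb, rfl⟩,
    fun h _ ⟨a, b, ha, hb, hp⟩ => hp ▸ h a b ha hb⟩

variable {K : Type*} [Field K] {n r : ℕ}

theorem trdeg_le_of_minorsIdeal_le_ker {D : Type*} [CommRing D] [IsDomain D] [Algebra K D]
    {φ : MvPolynomial (Sym2 (Fin n)) K →ₐ[K] D} (hφ : Function.Surjective φ)
    (hker : minorsIdeal K n (r + 1) ≤ RingHom.ker φ) (hr : r ≤ n) :
    Algebra.trdeg K D ≤ ((2 * n + 1 - r) * r / 2 : ℕ) := by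
  let ψ := (IsScalarTower.toAlgHom K D (FractionRing D)).comp φ
  let M : Matrix (Fin n) (Fin n) (FractionRing D) := Matrix.of fun i j => ψ (X s(i, j))
  have hrank : M.rank < r + 1 := (minorsIdeal_le_ker_iff ψ).1 fun p hp => by
    simpa [ψ] using congrArg (algebraMap D (FractionRing D)) (hker hp)
  have hsymm : M.IsSymm := Matrix.IsSymm.ext fun i j => by simp only [M, of_apply, Sym2.eq_swap]
  obtain ⟨A, hA, hgen⟩ := exists_finset_forall_apply_mem_of_rank_le hsymm
    (Nat.lt_succ_iff.1 hrank) (by simpa using hr)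
  let S := (fun p => ψ (X p)) '' (pairsMeeting A : Set (Sym2 (Fin n)))
  have hS (p : Sym2 (Fin n)) : ψ (X p) ∈ IntermediateField.adjoin K S := by
    induction p with | _ i j
    refine hgen (IntermediateField.adjoin K S).toSubfield (fun i hi j => ?_) i j
    exact IntermediateField.subset_adjoin K S ⟨s(i, j), mk_mem_pairsMeeting hi j, rfl⟩
  have hgenD : Algebra.adjoin K (Set.range fun p => φ (X p)) = ⊤ := by
    change Algebra.adjoin K (Set.range (φ ∘ X)) = ⊤
    rw [Set.range_comp, ← φ.map_adjoin, adjoin_range_X, Algebra.map_top,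
      (AlgHom.range_eq_top φ).2 hφ]
  have hcard : Cardinal.mk S ≤ ((2 * n + 1 - r) * r / 2 : ℕ) := by
    have := Cardinal.mk_image_le_lift (f := fun p => ψ (X p))
      (s := (pairsMeeting A : Set (Sym2 (Fin n))))
    simpa [card_pairsMeeting, hA] using this
  simpa using (lift_trdeg_le_of_forall_mem_adjoin hgenD hS).trans (Cardinal.lift_le.2 hcard)

theorem ringKrullDim_quotient_minorsIdeal_le (hr : r ≤ n) :
    ringKrullDim (MvPolynomial (Sym2 (Fin n)) K ⧸ minorsIdeal K n (r + 1)) ≤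
      ((2 * n + 1 - r) * r / 2 : ℕ) := by
  let I := minorsIdeal K n (r + 1)
  refine ringKrullDim_le_of_forall_isPrime fun P _ => ?_
  let φ := (Ideal.Quotient.mkₐ K P).comp (Ideal.Quotient.mkₐ K I)
  have hφ : Function.Surjective φ :=
    (Ideal.Quotient.mkₐ_surjective K P).comp (Ideal.Quotient.mkₐ_surjective K I)
  have hker : I ≤ RingHom.ker φ := fun p hp => by
    rw [RingHom.mem_ker, AlgHom.comp_apply, Ideal.Quotient.mkₐ_eq_mk, Ideal.Quotient.mkₐ_eq_mk,
      Ideal.Quotient.eq_zero_iff_mem.2 hp, map_zero]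
  exact ringKrullDim_le_natCast_of_trdeg_le (K := K) (trdeg_le_of_minorsIdeal_le_ker hφ hker hr)

theorem det_of_X_ne_zero {R σ m : Type*} [CommRing R] [Nontrivial R] [Fintype m]
    [DecidableEq m] {v : m → m → σ} (hv : ∀ i j k, v i j = v k k → i = j) :
    (Matrix.of fun i j => (X (v i j) : MvPolynomial σ R)).det ≠ 0 := by
  classical
  let f := eval ((Set.range fun k => v k k).indicator (1 : σ → R))
  have hf : f.mapMatrix (Matrix.of fun i j => (X (v i j) : MvPolynomial σ R)) = 1 := by
    ext i j
    have hmem : v i j ∈ (Set.range fun k => v k k) ↔ i = j :=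
      ⟨fun ⟨k, hk⟩ => hv i j k hk.symm, fun hij => ⟨i, by rw [hij]⟩⟩
    simp [f, Set.indicator_apply, hmem, Matrix.one_apply]
  intro hdet
  have := f.map_det (Matrix.of fun i j => (X (v i j) : MvPolynomial σ R))
  rw [hf, hdet, map_zero, det_one] at this
  exact zero_ne_one this

theorem exists_algHom_fractionRing_of_pairsMeeting (A : Finset (Fin n)) :
    ∃ φ : MvPolynomial (Sym2 (Fin n)) K →ₐ[K] FractionRing (MvPolynomial (pairsMeeting A) K),
      minorsIdeal K n (#A + 1) ≤ RingHom.ker φ ∧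
      ∀ p : pairsMeeting A, φ (X p) = algebraMap (MvPolynomial (pairsMeeting A) K) _ (X p) := by
  let R := MvPolynomial (pairsMeeting A) K
  let B₀ : Matrix A (Fin n) R := Matrix.of fun k j => X ⟨s(↑k, j), mk_mem_pairsMeeting k.2 j⟩
  let B : Matrix A (Fin n) (FractionRing R) := B₀.map (algebraMap R _)
  let M := skeletonCompletion Subtype.val B
  have hB : (B.submatrix id Subtype.val).IsSymm := Matrix.IsSymm.ext fun k l => by
    simp only [B, B₀, Matrix.submatrix_apply, Matrix.map_apply, of_apply, id, Sym2.eq_swap]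
  have hdet : (B₀.submatrix id Subtype.val).det ≠ 0 := det_of_X_ne_zero fun k l _ hkl =>
    Subtype.ext (by aesop)
  have hunit : IsUnit (B.submatrix id (Subtype.val : A → Fin n)) := by
    rw [isUnit_iff_isUnit_det, isUnit_iff_ne_zero]
    change ((algebraMap R (FractionRing R)).mapMatrix (B₀.submatrix id Subtype.val)).det ≠ 0
    rwa [← RingHom.map_det, ne_eq, IsFractionRing.to_map_eq_zero_iff]
  have hM : M.IsSymm := isSymm_skeletonCompletion hB
  let φ := aeval (R := K) (Sym2.lift ⟨fun i j => M i j, fun i j => hM.apply j i⟩)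
  have hφ (i j : Fin n) : φ (X s(i, j)) = M i j := by rw [aeval_X, Sym2.lift_mk]
  refine ⟨φ, (minorsIdeal_le_ker_iff φ).2 ?_, fun ⟨p, hp⟩ => ?_⟩
  · simp only [hφ]
    exact Nat.lt_succ_iff.2 ((rank_skeletonCompletion_le B).trans_eq (Fintype.card_coe A))
  · obtain ⟨i, hi, j, rfl⟩ := mem_pairsMeeting.1 hp
    rw [hφ]
    exact congrFun₂ (skeletonCompletion_submatrix hB hunit) ⟨i, hi⟩ j

theorem card_pairsMeeting_le_ringKrullDim_quotient_minorsIdeal (A : Finset (Fin n)) :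
    #(pairsMeeting A) ≤
      ringKrullDim (MvPolynomial (Sym2 (Fin n)) K ⧸ minorsIdeal K n (#A + 1)) := by
  obtain ⟨φ, hker, hφ⟩ := exists_algHom_fractionRing_of_pairsMeeting (K := K) A
  let R := MvPolynomial (pairsMeeting A) K
  let f := Ideal.Quotient.liftₐ (minorsIdeal K n (#A + 1)) φ hker
  let y (p : pairsMeeting A) := Ideal.Quotient.mk (minorsIdeal K n (#A + 1)) (X p.1)
  have hy : AlgebraicIndependent K (f ∘ y) := by
    have := (algebraicIndependent_X (pairsMeeting A) K).map'
      (f := IsScalarTower.toAlgHom K R (FractionRing R)) (IsFractionRing.injective _ _)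
    convert this using 1
    exact funext hφ
  simpa using natCard_le_ringKrullDim_of_algebraicIndependent f hy

end SymmetricMinors

/-- **Theorem 2.1 (part).** For every `2 ≤ t ≤ n`, the Krull dimension of `S/I_t` is
`(2n+2-t)(t-1)/2` (the product is even, so the natural-number division is exact). -/
theorem stmt16 {K : Type*} [Field K] (n t : ℕ) (ht2 : 2 ≤ t) (htn : t ≤ n) :
    ringKrullDim (MvPolynomial (Sym2 (Fin n)) K ⧸ minorsIdeal K n t) =
      (((2 * n + 2 - t) * (t - 1)) / 2 : ℕ) := by
  obtain ⟨r, rfl⟩ : ∃ r, t = r + 1 := ⟨t - 1, by lia⟩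
  have hr : r ≤ n := by lia
  rw [show 2 * n + 2 - (r + 1) = 2 * n + 1 - r by lia, Nat.add_sub_cancel]
  refine le_antisymm (ringKrullDim_quotient_minorsIdeal_le hr) ?_
  obtain ⟨A, -, rfl⟩ := Finset.exists_subset_card_eq (s := (Finset.univ : Finset (Fin n)))
    (by simpa using hr)
  simpa only [card_pairsMeeting, Fintype.card_fin] using
    card_pairsMeeting_le_ringKrullDim_quotient_minorsIdeal (K := K) A
end
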